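/- arXiv:2010.15494 — 3 statements merged into one kernel-verified Lean document; each statement's English description precedes it below -/
import Mathlib

section
/- For the Gauss–Kuzmin measure μ and φ(x) = ⌊1/x⌋, one has for t → 0⁺: ∫₀¹ (e^{itφ(x)} − 1) dμ(x) = −(it/log 2)(log t + γ − πi/2) + O(t^{2−ε}) for every ε > 0, where γ is the Euler–Mascheroni constant. -/
open MeasureTheory

noncomputable def gaussMeasure : Measure ℝ :=
  (volume.restrict (Set.Ioo (0:ℝ) 1)).withDensity
    (fun x => ENNReal.ofReal (1 / ((1 + x) * Real.log 2)))

/-!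
Write `z = e ^ (i t)` and let `a n = log (1 + 1 / n)`, so that `{φ ≥ n}` has measure `a n / log 2`.
Summation by parts turns the integral into `(1 - z⁻¹) ∑ a n z ^ n / log 2`, where
`1 - z⁻¹ = i t + O(t ^ 2)`. Since `a n` is close to `1 / n`, the singular part of the series is
`∑ z ^ n / n = -log (1 - z) = -log t + π i / 2 + O(t)`. The remainder `∑ (a n - 1 / n) z ^ n`
converges absolutely to `∑ (a n - 1 / n) = -γ` as `t → 0⁺`; because `a n - 1 / n = O(1 / n ^ 2)`,
its coefficients have finite moments of every order `p < 1`, so the error is `O(t ^ p)`.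
-/

open Filter Topology Asymptotics

section AbelSummation

lemma one_sub_mem_slitPlane {z : ℂ} (hz : ‖z‖ ≤ 1) (hz1 : z ≠ 1) : 1 - z ∈ Complex.slitPlane := by
  by_contra h
  rw [Complex.mem_slitPlane_iff, not_or, not_lt, not_not] at h
  simp only [Complex.sub_re, Complex.one_re, Complex.sub_im, Complex.one_im, zero_sub,
    neg_eq_zero] at h
  have hre : z.re ≤ 1 := (Complex.re_le_norm z).trans hz
  exact hz1 (Complex.ext (by simp only [Complex.one_re]; linarith) h.2)

lemma norm_geom_sum_le_of_norm_le_one {z : ℂ} (hz : ‖z‖ ≤ 1) (hz1 : z ≠ 1) (N : ℕ) :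
    ‖∑ n ∈ Finset.range N, z ^ n‖ ≤ 2 / ‖z - 1‖ := by
  rw [geom_sum_eq hz1, norm_div]
  gcongr
  calc ‖z ^ N - 1‖ ≤ ‖z ^ N‖ + ‖(1 : ℂ)‖ := norm_sub_le _ _
    _ ≤ 1 + 1 := by
      rw [norm_pow, norm_one]
      gcongr
      exact pow_le_one₀ (norm_nonneg z) hz
    _ = 2 := by norm_num

-- Dirichlet's test gives convergence, and Abel's limit theorem identifies the limit.
lemma tendsto_sum_range_pow_succ_div {z : ℂ} (hz : ‖z‖ ≤ 1) (hz1 : z ≠ 1) :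
    Tendsto (fun N : ℕ ↦ ∑ n ∈ Finset.range N, z ^ (n + 1) / ((n : ℂ) + 1)) atTop
      (𝓝 (-Complex.log (1 - z))) := by
  have hanti : Antitone fun n : ℕ ↦ 1 / ((n : ℝ) + 1) := fun _ _ h ↦ Nat.one_div_le_one_div h
  obtain ⟨l, hl⟩ := cauchySeq_tendsto_of_complete
    (hanti.cauchySeq_series_mul_of_tendsto_zero_of_bounded
      tendsto_one_div_add_atTop_nhds_zero_nat (norm_geom_sum_le_of_norm_le_one hz hz1))
  have hl' : Tendsto (fun N : ℕ ↦ ∑ n ∈ Finset.range N, z ^ (n + 1) / ((n : ℂ) + 1)) atTop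
      (𝓝 (z * l)) := by
    refine (hl.const_mul z).congr fun N ↦ ?_
    rw [Finset.mul_sum]
    refine Finset.sum_congr rfl fun n _ ↦ ?_
    rw [Complex.real_smul]
    push_cast
    ring
  have habel : Tendsto (fun r : ℝ ↦ -Complex.log (1 - r * z)) (𝓝[<] 1) (𝓝 (z * l)) := by
    have hr : Tendsto (fun r : ℝ ↦ (r : ℂ)) (𝓝[<] 1) (𝓝 1) :=
      (Complex.continuous_ofReal.tendsto' 1 1 Complex.ofReal_one).mono_left nhdsWithin_le_nhds
    have hmul := hr.mul (tendsto_map'_iff.1 (Complex.tendsto_tsum_powerSeries_nhdsWithin_lt hl'))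
    rw [one_mul] at hmul
    refine hmul.congr' ?_
    filter_upwards [Ioo_mem_nhdsLT (zero_lt_one' ℝ)] with r hr01
    have hrz : ‖(r : ℂ) * z‖ < 1 := by
      rw [norm_mul, Complex.norm_of_nonneg hr01.1.le]
      exact (mul_le_of_le_one_right hr01.1.le hz).trans_lt hr01.2
    rw [← (Complex.hasSum_taylorSeries_neg_log' hrz).tsum_eq, Function.comp_apply, ← tsum_mul_left]
    exact tsum_congr fun n ↦ by ring
  have hlog : Tendsto (fun r : ℝ ↦ -Complex.log (1 - r * z)) (𝓝[<] 1)
      (𝓝 (-Complex.log (1 - z))) := by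
    have hslit : 1 - ((1 : ℝ) : ℂ) * z ∈ Complex.slitPlane := by
      simpa using one_sub_mem_slitPlane hz hz1
    have hcont : ContinuousAt (fun r : ℝ ↦ Complex.log (1 - r * z)) 1 :=
      ContinuousAt.clog (by fun_prop) hslit
    simpa using hcont.tendsto.neg.mono_left nhdsWithin_le_nhds
  rwa [tendsto_nhds_unique hlog habel]

lemma sum_range_sub_mul_pow_succ_sub_one {K : Type*} [Field K] {z : K} (hz : z ≠ 0) (a : ℕ → K)
    (N : ℕ) :
    ∑ n ∈ Finset.range N, (a n - a (n + 1)) * (z ^ (n + 1) - 1) =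
      (1 - z⁻¹) * ∑ n ∈ Finset.range N, a n * z ^ (n + 1) - a N * (z ^ N - 1) := by
  induction N with
  | zero => simp
  | succ N ih =>
    rw [Finset.sum_range_succ, Finset.sum_range_succ, ih]
    field_simp
    ring

-- As `a n ~ 1 / (n + 1)`, the series `∑ a n z ^ (n + 1)` left by summation by parts converges only
-- conditionally; its singular part is the series of `-log (1 - z)`.
lemma tsum_sub_mul_pow_succ_sub_one {z : ℂ} (hz : ‖z‖ = 1) (hz1 : z ≠ 1) {a : ℕ → ℂ}
    (ha : Summable fun n ↦ a n - 1 / ((n : ℂ) + 1))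
    (hs : Summable fun n ↦ (a n - a (n + 1)) * (z ^ (n + 1) - 1)) :
    ∑' n, (a n - a (n + 1)) * (z ^ (n + 1) - 1) = (1 - z⁻¹) *
      (-Complex.log (1 - z) + ∑' n, z ^ (n + 1) * (a n - 1 / ((n : ℂ) + 1))) := by
  have hz0 : z ≠ 0 := norm_ne_zero_iff.1 (hz ▸ one_ne_zero)
  have hpow (n : ℕ) : ‖z ^ n‖ = 1 := by rw [norm_pow, hz, one_pow]
  have ha0 : Tendsto a atTop (𝓝 0) := by
    have hinv : Tendsto (fun n : ℕ ↦ 1 / ((n : ℂ) + 1)) atTop (𝓝 0) :=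
      tendsto_one_div_add_atTop_nhds_zero_nat
    simpa using ha.tendsto_atTop_zero.add hinv
  have hrem : Tendsto (fun N ↦ a N * (z ^ N - 1)) atTop (𝓝 0) := by
    refine squeeze_zero_norm (fun N ↦ ?_) (by simpa using ha0.norm.mul_const 2)
    rw [norm_mul]
    gcongr
    linarith [norm_sub_le (z ^ N) 1, hpow N, norm_one (α := ℂ)]
  have hreg : Summable fun n ↦ z ^ (n + 1) * (a n - 1 / ((n : ℂ) + 1)) :=
    .of_norm (ha.norm.congr fun n ↦ by rw [norm_mul, hpow, one_mul])
  have hmain : Tendsto (fun N ↦ ∑ n ∈ Finset.range N, a n * z ^ (n + 1)) atTop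
      (𝓝 (-Complex.log (1 - z) + ∑' n, z ^ (n + 1) * (a n - 1 / ((n : ℂ) + 1)))) := by
    refine ((tendsto_sum_range_pow_succ_div hz.le hz1).add
      hreg.hasSum.tendsto_sum_nat).congr fun N ↦ ?_
    rw [← Finset.sum_add_distrib]
    exact Finset.sum_congr rfl fun n _ ↦ by ring
  refine tendsto_nhds_unique hs.hasSum.tendsto_sum_nat ?_
  simpa only [sum_range_sub_mul_pow_succ_sub_one hz0, sub_zero] using
    (hmain.const_mul (1 - z⁻¹)).sub hrem

end AbelSummation

section OscillatingSeries

lemma norm_exp_I_mul_ofReal_sub_one_le_rpow (x : ℝ) {p : ℝ} (hp0 : 0 ≤ p) (hp1 : p ≤ 1) :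
    ‖Complex.exp (Complex.I * x) - 1‖ ≤ 2 * |x| ^ p := by
  rcases le_total |x| 1 with hx | hx
  · calc ‖Complex.exp (Complex.I * x) - 1‖ ≤ |x| := Real.norm_exp_I_mul_ofReal_sub_one_le
      _ ≤ |x| ^ p := Real.self_le_rpow_of_le_one (abs_nonneg x) hx hp1
      _ ≤ 2 * |x| ^ p := by linarith [Real.rpow_nonneg (abs_nonneg x) p]
  · calc ‖Complex.exp (Complex.I * x) - 1‖ ≤ ‖Complex.exp (Complex.I * x)‖ + ‖(1 : ℂ)‖ :=
          norm_sub_le _ _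
      _ = 2 * 1 := by rw [Complex.norm_exp_I_mul_ofReal, norm_one]; norm_num
      _ ≤ 2 * |x| ^ p := by gcongr; exact Real.one_le_rpow hx hp0

lemma norm_tsum_exp_mul_sub_tsum_le {ι : Type*} {c : ι → ℂ} {ω : ι → ℝ} {p : ℝ} (hp0 : 0 ≤ p)
    (hp1 : p ≤ 1) (hc : Summable c) (hω : Summable fun i ↦ |ω i| ^ p * ‖c i‖) (t : ℝ) :
    ‖∑' i, Complex.exp (Complex.I * (t * ω i : ℝ)) * c i - ∑' i, c i‖ ≤
      2 * (∑' i, |ω i| ^ p * ‖c i‖) * |t| ^ p := by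
  have hexp : Summable fun i ↦ Complex.exp (Complex.I * (t * ω i : ℝ)) * c i :=
    .of_norm (hc.norm.congr fun i ↦ by rw [norm_mul, Complex.norm_exp_I_mul_ofReal, one_mul])
  rw [← hexp.tsum_sub hc]
  refine tsum_of_norm_bounded ((hω.hasSum.mul_left 2).mul_right (|t| ^ p)) fun i ↦ ?_
  calc ‖Complex.exp (Complex.I * (t * ω i : ℝ)) * c i - c i‖
      = ‖Complex.exp (Complex.I * (t * ω i : ℝ)) - 1‖ * ‖c i‖ := by rw [← norm_mul, sub_one_mul]
    _ ≤ 2 * |t * ω i| ^ p * ‖c i‖ := by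
      gcongr
      exact norm_exp_I_mul_ofReal_sub_one_le_rpow _ hp0 hp1
    _ = 2 * (|ω i| ^ p * ‖c i‖) * |t| ^ p := by
      rw [abs_mul, Real.mul_rpow (abs_nonneg t) (abs_nonneg (ω i))]
      ring

end OscillatingSeries

section GaussMeasure

lemma integrableOn_Icc_gaussDensity :
    IntegrableOn (fun x : ℝ ↦ 1 / ((1 + x) * Real.log 2)) (Set.Icc 0 1) := by
  refine ContinuousOn.integrableOn_Icc (continuousOn_const.div (by fun_prop) fun x hx ↦ ?_)
  have : 0 < Real.log 2 := Real.log_pos one_lt_two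
  have : 0 < 1 + x := by linarith [hx.1]
  positivity

instance : IsFiniteMeasure gaussMeasure :=
  isFiniteMeasure_withDensity_ofReal
    (integrableOn_Icc_gaussDensity.mono_set Set.Ioo_subset_Icc_self).hasFiniteIntegral

lemma ae_gaussMeasure_mem_Ioo : ∀ᵐ x ∂gaussMeasure, x ∈ Set.Ioo (0 : ℝ) 1 :=
  (withDensity_absolutelyContinuous _ _).ae_le (ae_restrict_mem measurableSet_Ioo)

lemma gaussMeasure_real_Ioc {a b : ℝ} (ha : 0 ≤ a) (hab : a ≤ b) (hb : b ≤ 1) :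
    gaussMeasure.real (Set.Ioc a b) = (Real.log (1 + b) - Real.log (1 + a)) / Real.log 2 := by
  have hsub : Set.Ioc a b ⊆ Set.Ioc 0 1 := Set.Ioc_subset_Ioc ha hb
  have hpos (x : ℝ) (hx : x ∈ Set.Ioc a b) : 0 ≤ 1 / ((1 + x) * Real.log 2) := by
    have : 0 < 1 + x := by linarith [hx.1]
    positivity
  have hint : IntegrableOn (fun x : ℝ ↦ 1 / ((1 + x) * Real.log 2)) (Set.Ioc a b) :=
    integrableOn_Icc_gaussDensity.mono_set (hsub.trans Set.Ioc_subset_Icc_self)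
  have hdens : gaussMeasure.real (Set.Ioc a b) =
      ∫ x in Set.Ioc a b, 1 / ((1 + x) * Real.log 2) := by
    rw [measureReal_def, gaussMeasure, restrict_Ioo_eq_restrict_Ioc,
      withDensity_apply _ measurableSet_Ioc, Measure.restrict_restrict_of_subset hsub,
      ← ofReal_integral_eq_lintegral_ofReal hint
        ((ae_restrict_iff' measurableSet_Ioc).2 (.of_forall hpos)),
      ENNReal.toReal_ofReal (setIntegral_nonneg measurableSet_Ioc hpos)]
  calc gaussMeasure.real (Set.Ioc a b)
      = ∫ x in a..b, (1 + x)⁻¹ / Real.log 2 := by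
        rw [hdens, intervalIntegral.integral_of_le hab]
        exact integral_congr_ae (.of_forall fun x ↦ by
          simp only [mul_inv, div_eq_mul_inv, one_mul])
    _ = (Real.log (1 + b) - Real.log (1 + a)) / Real.log 2 := by
        rw [intervalIntegral.integral_div,
          intervalIntegral.integral_comp_add_left (fun x ↦ x⁻¹) 1,
          integral_inv_of_pos (by positivity) (by linarith),
          Real.log_div (by linarith) (by positivity)]

/-- `log 2` times the Gauss–Kuzmin measure of the set of `x` with `n + 1 ≤ ⌊1 / x⌋`. The digits
start at `1`, so every index in this file is a digit minus one. -/
noncomputable def gaussTail (n : ℕ) : ℝ := Real.log (1 + 1 / ((n : ℝ) + 1))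

lemma preimage_floor_one_div (n : ℕ) :
    (fun x : ℝ ↦ ⌊1 / x⌋) ⁻¹' {(n : ℤ) + 1} =
      Set.Ioc (1 / (((n + 1 : ℕ) : ℝ) + 1)) (1 / ((n : ℝ) + 1)) := by
  ext x
  simp only [Set.mem_preimage, Set.mem_singleton_iff, Set.mem_Ioc, Int.floor_eq_iff]
  push_cast
  rcases le_or_gt x 0 with hx | hx
  · have hxinv : 1 / x ≤ 0 := one_div_nonpos.2 hx
    have hn : 0 < 1 / ((n : ℝ) + 1 + 1) := by positivity
    constructor <;> rintro ⟨h, _⟩ <;> linarith [n.cast_nonneg (α := ℝ)]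
  · rw [le_div_comm₀ (by positivity) hx, div_lt_comm₀ hx (by positivity), and_comm]

lemma gaussMeasure_real_preimage_floor (n : ℕ) :
    gaussMeasure.real ((fun x : ℝ ↦ ⌊1 / x⌋) ⁻¹' {(n : ℤ) + 1}) =
      (gaussTail n - gaussTail (n + 1)) / Real.log 2 := by
  rw [preimage_floor_one_div, gaussMeasure_real_Ioc (by positivity)
    (Nat.one_div_le_one_div n.le_succ) ((div_le_one (by positivity)).2 (by simp))]
  rfl

lemma measurable_floor_one_div : Measurable fun x : ℝ ↦ ⌊1 / x⌋ :=
  Int.measurable_floor.comp (by fun_prop)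

lemma iUnion_preimage_floor_ae_eq_univ :
    ⋃ n : ℕ, (fun x : ℝ ↦ ⌊1 / x⌋) ⁻¹' {(n : ℤ) + 1} =ᵐ[gaussMeasure] Set.univ := by
  rw [eventuallyEq_univ]
  filter_upwards [ae_gaussMeasure_mem_Ioo] with x hx
  have hfloor : 1 ≤ ⌊1 / x⌋ := by
    rw [Int.le_floor, Int.cast_one]
    exact (one_le_div hx.1).2 hx.2.le
  refine Set.mem_iUnion.2 ⟨(⌊1 / x⌋ - 1).toNat, ?_⟩
  simp only [Set.mem_preimage, Set.mem_singleton_iff]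
  lia

theorem hasSum_integral_comp_floor_one_div {E : Type*} [NormedAddCommGroup E] [NormedSpace ℝ E]
    [CompleteSpace E] {f : ℤ → E} {C : ℝ} (hf : ∀ m, ‖f m‖ ≤ C) :
    HasSum (fun n : ℕ ↦ ((gaussTail n - gaussTail (n + 1)) / Real.log 2) • f (n + 1))
      (∫ x, f ⌊1 / x⌋ ∂gaussMeasure) := by
  have hmeas (n : ℕ) : MeasurableSet ((fun x : ℝ ↦ ⌊1 / x⌋) ⁻¹' {(n : ℤ) + 1}) :=
    measurable_floor_one_div (measurableSet_singleton _)
  have hdisj : Pairwise (Function.onFun Disjoint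
      fun n : ℕ ↦ (fun x : ℝ ↦ ⌊1 / x⌋) ⁻¹' {(n : ℤ) + 1}) :=
    (pairwise_disjoint_fiber fun x : ℝ ↦ ⌊1 / x⌋).comp_of_injective
      fun m n (h : (m : ℤ) + 1 = n + 1) ↦ by lia
  have hint : Integrable (fun x ↦ f ⌊1 / x⌋) gaussMeasure :=
    .of_bound ((StronglyMeasurable.of_discrete (f := f)).comp_measurable
      measurable_floor_one_div).aestronglyMeasurable C (.of_forall fun _ ↦ hf _)
  have hsum := hasSum_integral_iUnion hmeas hdisj hint.integrableOn
  rw [setIntegral_congr_set iUnion_preimage_floor_ae_eq_univ, setIntegral_univ] at hsum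
  refine hsum.congr_fun fun n ↦ ?_
  rw [← gaussMeasure_real_preimage_floor, ← setIntegral_const]
  exact setIntegral_congr_fun (hmeas n) fun x hx ↦ congrArg f hx.symm

end GaussMeasure

section Remainder

lemma abs_log_one_add_sub_self_le {u : ℝ} (hu : 0 ≤ u) : |Real.log (1 + u) - u| ≤ u ^ 2 := by
  have hupper : Real.log (1 + u) ≤ u := by
    linarith [Real.log_le_sub_one_of_pos (x := 1 + u) (by linarith)]
  have hlower : u - u ^ 2 ≤ Real.log (1 + u) := calc
    u - u ^ 2 ≤ 2 * u / (u + 2) := by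
      rw [le_div_iff₀ (by linarith)]
      nlinarith [pow_nonneg hu 3]
    _ ≤ Real.log (1 + u) := Real.le_log_one_add_of_nonneg hu
  rw [abs_le]
  constructor <;> linarith [sq_nonneg u]

lemma summable_rpow_mul_abs_gaussTail_sub {p : ℝ} (hp : p < 1) :
    Summable fun n : ℕ ↦ |(n : ℝ) + 1| ^ p * |gaussTail n - 1 / ((n : ℝ) + 1)| := by
  refine .of_nonneg_of_le (fun n ↦ by positivity) (fun n ↦ ?_)
    ((Real.summable_one_div_nat_add_rpow 1 (2 - p)).2 (by linarith))
  have hn : 0 < |(n : ℝ) + 1| := abs_pos.2 (by positivity)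
  calc |(n : ℝ) + 1| ^ p * |gaussTail n - 1 / ((n : ℝ) + 1)|
      ≤ |(n : ℝ) + 1| ^ p * (1 / ((n : ℝ) + 1)) ^ 2 := by
        gcongr
        exact abs_log_one_add_sub_self_le (by positivity)
    _ = 1 / |(n : ℝ) + 1| ^ (2 - p) := by
        rw [Real.rpow_sub hn, Real.rpow_two, one_div_pow, ← sq_abs ((n : ℝ) + 1), one_div_div,
          mul_one_div]

lemma summable_gaussTail_sub : Summable fun n : ℕ ↦ gaussTail n - 1 / ((n : ℝ) + 1) :=
  .of_norm (by simpa using summable_rpow_mul_abs_gaussTail_sub zero_lt_one)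

lemma sum_range_gaussTail_sub (N : ℕ) :
    ∑ n ∈ Finset.range N, (gaussTail n - 1 / ((n : ℝ) + 1)) = -Real.eulerMascheroniSeq N := by
  induction N with
  | zero => simp [Real.eulerMascheroniSeq_zero]
  | succ N ih =>
    have hlog : gaussTail N = Real.log ((N : ℝ) + 1 + 1) - Real.log ((N : ℝ) + 1) := by
      rw [gaussTail, ← Real.log_div (by positivity) (by positivity), add_div,
        div_self (by positivity)]
    rw [Finset.sum_range_succ, ih, hlog, Real.eulerMascheroniSeq, Real.eulerMascheroniSeq,
      harmonic_succ]
    push_cast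
    ring

lemma hasSum_gaussTail_sub :
    HasSum (fun n : ℕ ↦ gaussTail n - 1 / ((n : ℝ) + 1)) (-Real.eulerMascheroniConstant) := by
  rw [summable_gaussTail_sub.hasSum_iff_tendsto_nat]
  simpa only [sum_range_gaussTail_sub] using Real.tendsto_eulerMascheroniSeq.neg

end Remainder

section Asymptotics

lemma rpow_isBigO_rpow_nhdsGT_zero {a b : ℝ} (hab : a ≤ b) :
    (fun t : ℝ ↦ t ^ b) =O[𝓝[>] 0] fun t ↦ t ^ a := by
  refine .of_bound' ?_
  filter_upwards [Ioo_mem_nhdsGT (zero_lt_one' ℝ)] with t ht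
  rw [Real.norm_of_nonneg (Real.rpow_nonneg ht.1.le b),
    Real.norm_of_nonneg (Real.rpow_nonneg ht.1.le a)]
  exact Real.rpow_le_rpow_of_exponent_ge ht.1 ht.2.le hab

lemma log_ofReal_mul_neg_I_mul {r : ℝ} {w : ℂ} (hr : 0 < r) (hw : 0 < w.re) :
    Complex.log (r * (-Complex.I * w)) =
      Real.log r - Real.pi * Complex.I / 2 + Complex.log w := by
  have hI : -Complex.I ≠ 0 := neg_ne_zero.2 Complex.I_ne_zero
  have hw0 : w ≠ 0 := fun h ↦ hw.ne' (h ▸ Complex.zero_re)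
  have harg := abs_lt.1 (Complex.abs_arg_lt_pi_div_two_iff.2 (.inl hw))
  have hsum : (-Complex.I).arg + w.arg ∈ Set.Ioc (-Real.pi) Real.pi := by
    rw [Complex.arg_neg_I]
    constructor <;> linarith [Real.pi_pos]
  rw [Complex.log_ofReal_mul hr (mul_ne_zero hI hw0), Complex.log_mul hI hw0 hsum,
    Complex.log_neg_I]
  ring

lemma norm_log_one_sub_exp_sub_le {t : ℝ} (ht0 : 0 < t) (ht : t ≤ 1 / 2) :
    ‖Complex.log (1 - Complex.exp (Complex.I * t)) - (Real.log t - Real.pi * Complex.I / 2)‖ ≤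
      3 / 2 * t := by
  have hnorm : ‖Complex.I * (t : ℂ)‖ = t := by simp [abs_of_pos ht0]
  have ht_ne : (t : ℂ) ≠ 0 := Complex.ofReal_ne_zero.2 ht0.ne'
  set u : ℂ := (Complex.exp (Complex.I * t) - 1 - Complex.I * t) / (Complex.I * t) with hu
  have hut : ‖u‖ ≤ t := by
    rw [hu, norm_div, hnorm, div_le_iff₀ ht0, ← sq]
    simpa only [hnorm] using
      Complex.norm_exp_sub_one_sub_id_le (x := Complex.I * t) (by linarith)
  have hfactor : 1 - Complex.exp (Complex.I * t) = t * (-Complex.I * (1 + u)) := by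
    rw [hu]
    field_simp
    ring
  have hre : 0 < (1 + u).re := by
    rw [Complex.add_re, Complex.one_re]
    linarith [(abs_le.1 ((Complex.abs_re_le_norm u).trans hut)).1]
  rw [hfactor, log_ofReal_mul_neg_I_mul ht0 hre, add_sub_cancel_left]
  calc ‖Complex.log (1 + u)‖ ≤ 3 / 2 * ‖u‖ :=
        Complex.norm_log_one_add_half_le_self (hut.trans ht)
    _ ≤ 3 / 2 * t := by gcongr

lemma log_one_sub_exp_sub_isBigO :
    (fun t : ℝ ↦ Complex.log (1 - Complex.exp (Complex.I * t)) -
      (Real.log t - Real.pi * Complex.I / 2)) =O[𝓝[>] 0] fun t ↦ t := by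
  refine .of_bound (3 / 2) ?_
  filter_upwards [Ioo_mem_nhdsGT (half_pos (zero_lt_one' ℝ))] with t ht
  rw [Real.norm_of_nonneg ht.1.le]
  exact norm_log_one_sub_exp_sub_le ht.1 ht.2.le

lemma one_sub_inv_exp_sub_isBigO :
    (fun t : ℝ ↦ 1 - (Complex.exp (Complex.I * t))⁻¹ - Complex.I * t) =O[𝓝[>] 0]
      fun t ↦ t ^ 2 := by
  refine .of_bound 1 ?_
  filter_upwards [Ioo_mem_nhdsGT (zero_lt_one' ℝ)] with t ht
  have hnorm : ‖-(Complex.I * (t : ℂ))‖ = t := by simp [abs_of_pos ht.1]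
  have hexp := Complex.norm_exp_sub_one_sub_id_le (hnorm.trans_le ht.2.le)
  have hneg : 1 - (Complex.exp (Complex.I * t))⁻¹ - Complex.I * t =
      -(Complex.exp (-(Complex.I * t)) - 1 - -(Complex.I * t)) := by
    rw [Complex.exp_neg]
    ring
  rw [hneg, norm_neg, one_mul, Real.norm_of_nonneg (sq_nonneg t)]
  rwa [hnorm] at hexp

/-- The regular part `∑ (gaussTail n - 1 / (n + 1)) e ^ (i t (n + 1))` of the Fourier series with
coefficients `gaussTail n`. -/
noncomputable def gaussTailRegular (t : ℝ) : ℂ :=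
  ∑' n : ℕ, Complex.exp (Complex.I * t) ^ (n + 1) * (gaussTail n - 1 / ((n : ℂ) + 1))

lemma gaussTailRegular_add_eulerMascheroni_isBigO {p : ℝ} (hp0 : 0 ≤ p) (hp1 : p < 1) :
    (fun t ↦ gaussTailRegular t + Real.eulerMascheroniConstant) =O[𝓝[>] 0] fun t ↦ t ^ p := by
  set c : ℕ → ℂ := fun n ↦ ((gaussTail n - 1 / ((n : ℝ) + 1) : ℝ) : ℂ) with hc
  have hsum : HasSum c (-Real.eulerMascheroniConstant) := by
    simpa only [Complex.ofReal_neg] using Complex.hasSum_ofReal.2 hasSum_gaussTail_sub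
  have hmoment : Summable fun n : ℕ ↦ |(n : ℝ) + 1| ^ p * ‖c n‖ := by
    simpa only [hc, Complex.norm_real, Real.norm_eq_abs] using
      summable_rpow_mul_abs_gaussTail_sub hp1
  refine .of_bound (2 * ∑' n : ℕ, |(n : ℝ) + 1| ^ p * ‖c n‖) ?_
  filter_upwards [self_mem_nhdsWithin] with t (ht : 0 < t)
  have hseries : gaussTailRegular t =
      ∑' n : ℕ, Complex.exp (Complex.I * (t * ((n : ℝ) + 1) : ℝ)) * c n := by
    refine tsum_congr fun n ↦ ?_
    rw [← Complex.exp_nat_mul, hc]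
    push_cast
    ring_nf
  have hbound := norm_tsum_exp_mul_sub_tsum_le hp0 hp1.le hsum.summable hmoment t
  rwa [← hseries, hsum.tsum_eq, sub_neg_eq_add, abs_of_pos ht,
    ← Real.norm_of_nonneg (Real.rpow_nonneg ht.le p)] at hbound

/-- The bracket `log t + γ - π i / 2` of the expansion. -/
noncomputable def gaussLogTerm (t : ℝ) : ℂ :=
  Real.log t + Real.eulerMascheroniConstant - Real.pi * Complex.I / 2

lemma gaussLogTerm_isBigO {r : ℝ} (hr : r < 0) : gaussLogTerm =O[𝓝[>] 0] fun t ↦ t ^ r := by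
  have hlog : (fun t : ℝ ↦ (Real.log t : ℂ)) =O[𝓝[>] 0] fun t ↦ t ^ r :=
    Complex.isBigO_ofReal_left.2 (isLittleO_log_rpow_nhdsGT_zero hr).isBigO
  have hconst (w : ℂ) : (fun _ : ℝ ↦ w) =O[𝓝[>] 0] fun t : ℝ ↦ t ^ r :=
    ((isLittleO_const_left).2 (.inr
      (tendsto_norm_atTop_atTop.comp (tendsto_rpow_neg_nhdsGT_zero hr)))).isBigO
  exact (hlog.add (hconst _)).sub (hconst _)

lemma exp_I_mul_ofReal_ne_one {t : ℝ} (ht0 : t ≠ 0) (ht : |t| < 2 * Real.pi) :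
    Complex.exp (Complex.I * t) ≠ 1 := by
  intro hexp
  have hcos : Real.cos t = 1 := by
    rw [← Complex.exp_ofReal_mul_I_re, mul_comm, hexp, Complex.one_re]
  have ht' := abs_lt.1 ht
  exact ht0 ((Real.cos_eq_one_iff_of_lt_of_lt ht'.1 ht'.2).1 hcos)

theorem log_two_mul_integral_exp_floor_sub_one {t : ℝ} (ht : Complex.exp (Complex.I * t) ≠ 1) :
    Real.log 2 * ∫ x, (Complex.exp (Complex.I * t * (⌊1 / x⌋ : ℂ)) - 1) ∂gaussMeasure =
      (1 - (Complex.exp (Complex.I * t))⁻¹) *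
        (-Complex.log (1 - Complex.exp (Complex.I * t)) + gaussTailRegular t) := by
  have hlog2 : (Real.log 2 : ℂ) ≠ 0 := Complex.ofReal_ne_zero.2 (Real.log_pos one_lt_two).ne'
  have hbdd (m : ℤ) : ‖Complex.exp (Complex.I * t * m) - 1‖ ≤ 2 := by
    have hcast : Complex.I * t * m = Complex.I * (t * m : ℝ) := by push_cast; ring
    simpa [hcast] using norm_exp_I_mul_ofReal_sub_one_le_rpow (t * m) le_rfl zero_le_one
  have hseries : HasSum
      (fun n : ℕ ↦ ((gaussTail n : ℂ) - (gaussTail (n + 1) : ℂ)) *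
        (Complex.exp (Complex.I * t) ^ (n + 1) - 1))
      (Real.log 2 * ∫ x, (Complex.exp (Complex.I * t * (⌊1 / x⌋ : ℂ)) - 1) ∂gaussMeasure) := by
    refine ((hasSum_integral_comp_floor_one_div hbdd).mul_left _).congr_fun fun n ↦ ?_
    rw [← Complex.exp_nat_mul, Complex.real_smul]
    push_cast
    field_simp
  have hreg : Summable fun n : ℕ ↦ (gaussTail n : ℂ) - 1 / ((n : ℂ) + 1) := by
    simpa using Complex.summable_ofReal.2 summable_gaussTail_sub
  rw [← hseries.tsum_eq, tsum_sub_mul_pow_succ_sub_one (Complex.norm_exp_I_mul_ofReal t) ht hreg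
    hseries.summable, gaussTailRegular]

lemma neg_log_one_sub_exp_add_gaussTailRegular_isBigO {p : ℝ} (hp0 : 0 ≤ p) (hp1 : p < 1) :
    (fun t : ℝ ↦ -Complex.log (1 - Complex.exp (Complex.I * t)) + gaussTailRegular t +
      gaussLogTerm t) =O[𝓝[>] 0] fun t ↦ t ^ p := by
  have hid : (fun t : ℝ ↦ t) =O[𝓝[>] 0] fun t ↦ t ^ p := by
    simpa only [Real.rpow_one] using rpow_isBigO_rpow_nhdsGT_zero hp1.le
  refine ((gaussTailRegular_add_eulerMascheroni_isBigO hp0 hp1).sub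
    (log_one_sub_exp_sub_isBigO.trans hid)).congr_left fun t ↦ ?_
  rw [gaussLogTerm]
  ring

theorem integral_exp_floor_sub_one_isBigO {p : ℝ} (hp0 : 0 ≤ p) (hp1 : p < 1) :
    (fun t : ℝ ↦ (∫ x, (Complex.exp (Complex.I * t * (⌊1 / x⌋ : ℂ)) - 1) ∂gaussMeasure) -
      -(Complex.I * t / Real.log 2) * gaussLogTerm t) =O[𝓝[>] 0] fun t ↦ t ^ (1 + p) := by
  set D : ℝ → ℂ := fun t ↦ 1 - (Complex.exp (Complex.I * t))⁻¹
  set B : ℝ → ℂ := fun t ↦ -Complex.log (1 - Complex.exp (Complex.I * t)) + gaussTailRegular t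
  have hlog2 : (Real.log 2 : ℂ) ≠ 0 := Complex.ofReal_ne_zero.2 (Real.log_pos one_lt_two).ne'
  have hBL : (fun t ↦ B t + gaussLogTerm t) =O[𝓝[>] 0] fun t ↦ t ^ p :=
    neg_log_one_sub_exp_add_gaussTailRegular_isBigO hp0 hp1
  have hB : B =O[𝓝[>] 0] fun t ↦ t ^ (p - 1) := by
    simpa only [add_sub_cancel_right] using
      (hBL.trans (rpow_isBigO_rpow_nhdsGT_zero (sub_le_self p zero_le_one))).sub
        (gaussLogTerm_isBigO (sub_neg.2 hp1))
  have hfirst : (fun t ↦ (D t - Complex.I * t) * B t) =O[𝓝[>] 0] fun t ↦ t ^ (1 + p) := by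
    refine (one_sub_inv_exp_sub_isBigO.mul hB).congr' .rfl ?_
    filter_upwards [self_mem_nhdsWithin] with t (ht : 0 < t)
    rw [← Real.rpow_two, ← Real.rpow_add ht]
    ring_nf
  have hsecond : (fun t : ℝ ↦ Complex.I * t * (B t + gaussLogTerm t)) =O[𝓝[>] 0]
      fun t ↦ t ^ (1 + p) := by
    have hIt : (fun t : ℝ ↦ Complex.I * (t : ℂ)) =O[𝓝[>] 0] fun t ↦ t :=
      (Complex.isBigO_ofReal_left.2 (isBigO_refl _ _)).const_mul_left _
    refine (hIt.mul hBL).congr' .rfl ?_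
    filter_upwards [self_mem_nhdsWithin] with t (ht : 0 < t)
    rw [Real.rpow_add ht, Real.rpow_one]
  refine ((hfirst.add hsecond).const_mul_left (Real.log 2 : ℂ)⁻¹).congr' ?_ .rfl
  filter_upwards [Ioo_mem_nhdsGT Real.two_pi_pos] with t ht
  have hint := log_two_mul_integral_exp_floor_sub_one (exp_I_mul_ofReal_ne_one ht.1.ne'
    ((abs_of_pos ht.1).trans_lt ht.2))
  rw [← eq_inv_mul_iff_mul_eq₀ hlog2] at hint
  rw [hint]
  ring

end Asymptotics

theorem stmt_15 (ε : ℝ) (hε : 0 < ε) : ∃ C > (0:ℝ), ∃ t₀ > (0:ℝ), ∀ t : ℝ,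
    0 < t → t < t₀ →
    ‖(∫ x, (Complex.exp (Complex.I * (t : ℂ) * (⌊1 / x⌋ : ℂ)) - 1) ∂gaussMeasure) -
        (-(Complex.I * (t : ℂ) / (Real.log 2 : ℂ)) *
          ((Real.log t : ℂ) + (Real.eulerMascheroniConstant : ℂ) -
            (Real.pi : ℂ) * Complex.I / 2))‖ ≤
      C * t ^ (2 - ε) := by
  have hO := integral_exp_floor_sub_one_isBigO (le_max_right (1 - ε) 0)
    (max_lt (sub_lt_self 1 hε) zero_lt_one)
  have hexponent : 2 - ε ≤ 1 + max (1 - ε) 0 := by linarith [le_max_left (1 - ε) 0]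
  obtain ⟨C, hC, hbound⟩ := (hO.trans (rpow_isBigO_rpow_nhdsGT_zero hexponent)).exists_pos
  obtain ⟨t₀, ht₀, hsub⟩ := mem_nhdsGT_iff_exists_Ioo_subset.1 hbound.bound
  refine ⟨C, hC, t₀, ht₀, fun t ht htt₀ ↦ ?_⟩
  simpa only [Set.mem_ofPred_eq, gaussLogTerm, Real.norm_of_nonneg (Real.rpow_nonneg ht.le _)] using
    hsub ⟨ht, htt₀⟩
end

section
/- For the Gauss–Kuzmin measure μ, the function φ(x) = ⌊1/x⌋ − ⌊1/T(x)⌋ (where T is the Gauss map) satisfies ∫₀¹ (e^{itφ(x)} − 1) dμ(x) = −(π/log 2)·t + O(t² (log t)²) as t → 0⁺. -/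
open MeasureTheory

noncomputable def gaussMap (x : ℝ) : ℝ := Int.fract (1 / x)

/-!
With `X = ⌊1 / x⌋` and `Y = ⌊1 / T x⌋`, write
`e^{it(X - Y)} - 1 = (e^{itX} - 1) (e^{-itY} - 1) + (e^{itX} - 1) + (e^{-itY} - 1)`.

By `T`-invariance of `μ`, `Y` has the law of `X`, so the two linear terms integrate to
`-2 ∫ (1 - cos (t X)) dμ`, the imaginary parts cancelling. Since
`μ (X = n) = log₂ (1 + 1 / (n (n + 2)))` is `1 / (n² log 2)` up to `O(n⁻³)`, that integral is
governed by the Fourier series `∑ (1 - cos (n t)) / n² = π t / 2 - t² / 4`.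

The product term has order `(t log t)²`: since `μ (X = n, Y = m) = O(1 / (n² m²))`, its bound
factors into the square of `∑ min 2 (t n) / n² = O(t |log t|)`.
-/

open Set Filter Topology

namespace GaussKuzmin

section CountableValued

variable {α ι E : Type*} [MeasurableSpace α] {μ : Measure α} [Countable ι] [MeasurableSpace ι]
  [MeasurableSingletonClass ι] [NormedAddCommGroup E] [NormedSpace ℝ E] [CompleteSpace E]
  {Z : α → ι} {F : ι → E}

lemma hasSum_measureReal_preimage_singleton_inter [IsFiniteMeasure μ] (hZ : Measurable Z)
    {s : Set α} (hs : MeasurableSet s) :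
    HasSum (fun i => μ.real (Z ⁻¹' {i} ∩ s)) (μ.real s) := by
  have hμ : μ s = ∑' i, μ (Z ⁻¹' {i} ∩ s) := by
    rw [← measure_iUnion (fun i j hij => ?_) fun i => (hZ (measurableSet_singleton i)).inter hs]
    · congr 1
      ext x
      simp
    · exact (((disjoint_singleton.2 hij).preimage Z).inter_left s).inter_right s
  simpa only [measureReal_def, hμ, ENNReal.tsum_toReal_eq fun _ => measure_ne_top μ _] using
    ENNReal.hasSum_toReal (hμ ▸ measure_ne_top μ s)

lemma integral_comp_eq_tsum (hZ : Measurable Z) (hF : Integrable (fun x => F (Z x)) μ) :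
    ∫ x, F (Z x) ∂μ = ∑' i, μ.real (Z ⁻¹' {i}) • F i := by
  have hFm : AEStronglyMeasurable F (μ.map Z) := StronglyMeasurable.of_discrete.aestronglyMeasurable
  rw [← integral_map hZ.aemeasurable hFm,
    integral_countable ((integrable_map_measure hFm hZ.aemeasurable).2 hF)]
  simp_rw [map_measureReal_apply hZ (measurableSet_singleton _)]

lemma norm_integral_comp_le_tsum {b : ι → ℝ} (hZ : Measurable Z) (hb : Summable b)
    (h : ∀ i, μ.real (Z ⁻¹' {i}) * ‖F i‖ ≤ b i) : ‖∫ x, F (Z x) ∂μ‖ ≤ ∑' i, b i := by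
  by_cases hF : Integrable (fun x => F (Z x)) μ
  · rw [integral_comp_eq_tsum hZ hF]
    refine tsum_of_norm_bounded hb.hasSum fun i => ?_
    rw [norm_smul, Real.norm_of_nonneg measureReal_nonneg]
    exact h i
  · rw [integral_undef hF, norm_zero]
    exact tsum_nonneg fun i => le_trans (by positivity) (h i)

end CountableValued

section Series

variable {c t : ℝ}

/- Each sum below has a term `n = 0`; it vanishes because division by zero gives zero. -/

lemma sum_range_floor_inv_min_mul_div_sq_le (ht : 0 < t) (ht₁ : t ≤ 1) :
    ∑ n ∈ Finset.range (⌊t⁻¹⌋₊ + 1), min c (t * n) / (n : ℝ) ^ 2 ≤ t + t.negMulLog :=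
  calc ∑ n ∈ Finset.range (⌊t⁻¹⌋₊ + 1), min c (t * n) / (n : ℝ) ^ 2
      ≤ ∑ n ∈ Finset.range (⌊t⁻¹⌋₊ + 1), t * (n : ℝ)⁻¹ := by
        gcongr with n
        rw [div_eq_mul_inv]
        grw [min_le_right]
        rcases eq_or_ne n 0 with rfl | hn
        · simp
        · exact le_of_eq (by field_simp)
    _ = t * harmonic ⌊t⁻¹⌋₊ := by simp [Finset.sum_range_succ', ← Finset.mul_sum, harmonic]
    _ ≤ t * (1 + Real.log t⁻¹) := by
        gcongr
        exact harmonic_floor_le_one_add_log _ ((one_le_inv₀ ht).2 ht₁)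
    _ = t + t.negMulLog := by rw [Real.log_inv, Real.negMulLog]; ring

lemma sum_Ioo_floor_inv_min_mul_div_sq_le (hc : 0 ≤ c) (ht : 0 < t) (M : ℕ) :
    ∑ n ∈ Finset.Ioo ⌊t⁻¹⌋₊ M, min c (t * n) / (n : ℝ) ^ 2 ≤ 2 * c * t :=
  calc ∑ n ∈ Finset.Ioo ⌊t⁻¹⌋₊ M, min c (t * n) / (n : ℝ) ^ 2
      ≤ ∑ n ∈ Finset.Ioo ⌊t⁻¹⌋₊ M, c * ((n : ℝ) ^ 2)⁻¹ := by
        simp_rw [div_eq_mul_inv]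
        gcongr
        exact min_le_left _ _
    _ ≤ c * (2 / (⌊t⁻¹⌋₊ + 1)) := by
        rw [← Finset.mul_sum]
        gcongr
        exact sum_Ioo_inv_sq_le _ M
    _ ≤ c * (2 / t⁻¹) := by
        gcongr
        exact (Nat.lt_floor_add_one _).le
    _ = 2 * c * t := by rw [div_inv_eq_mul]; ring

lemma sum_range_min_mul_div_sq_le (hc : 0 ≤ c) (ht : 0 < t) (ht₁ : t ≤ 1) (M : ℕ) :
    ∑ n ∈ Finset.range M, min c (t * n) / (n : ℝ) ^ 2 ≤ (1 + 2 * c) * t + t.negMulLog := by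
  set N := ⌊t⁻¹⌋₊
  have hsub : Finset.range M ⊆ Finset.range (N + 1) ∪ Finset.Ioo N M := by
    intro n
    simp only [Finset.mem_union, Finset.mem_range, Finset.mem_Ioo]
    omega
  have hdisj : Disjoint (Finset.range (N + 1)) (Finset.Ioo N M) := by
    simp only [Finset.disjoint_left, Finset.mem_range, Finset.mem_Ioo]
    omega
  calc ∑ n ∈ Finset.range M, min c (t * n) / (n : ℝ) ^ 2
      ≤ ∑ n ∈ Finset.range (N + 1) ∪ Finset.Ioo N M, min c (t * n) / (n : ℝ) ^ 2 :=
        Finset.sum_le_sum_of_subset_of_nonneg hsub fun n _ _ => by positivity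
    _ ≤ (1 + 2 * c) * t + t.negMulLog := by
        rw [Finset.sum_union hdisj]
        linarith [sum_range_floor_inv_min_mul_div_sq_le (c := c) ht ht₁,
          sum_Ioo_floor_inv_min_mul_div_sq_le hc ht M]

lemma summable_min_mul_div_sq (hc : 0 ≤ c) (ht : 0 < t) (ht₁ : t ≤ 1) :
    Summable fun n : ℕ => min c (t * n) / (n : ℝ) ^ 2 :=
  summable_of_sum_range_le (fun _ => by positivity) (sum_range_min_mul_div_sq_le hc ht ht₁)

lemma tsum_min_mul_div_sq_le (hc : 0 ≤ c) (ht : 0 < t) (ht₁ : t ≤ 1) :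
    ∑' n : ℕ, min c (t * n) / (n : ℝ) ^ 2 ≤ (1 + 2 * c) * t + t.negMulLog :=
  Real.tsum_le_of_sum_range_le (fun _ => by positivity) (sum_range_min_mul_div_sq_le hc ht ht₁)

lemma le_negMulLog (ht : 0 < t) (hte : t ≤ Real.exp (-1)) : t ≤ t.negMulLog := by
  have hlog : Real.log t ≤ -1 := (Real.log_le_iff_le_exp ht).2 hte
  rw [Real.negMulLog]
  nlinarith

lemma tsum_min_two_mul_div_sq_le (ht : 0 < t) (hte : t ≤ Real.exp (-1)) :
    ∑' n : ℕ, min 2 (t * n) / (n : ℝ) ^ 2 ≤ 6 * t.negMulLog := by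
  have ht₁ : t ≤ 1 := hte.trans (Real.exp_le_one_iff.2 (by norm_num))
  linarith [tsum_min_mul_div_sq_le zero_le_two ht ht₁, le_negMulLog ht hte]

lemma hasSum_one_sub_cos_div_sq (ht₀ : 0 ≤ t) (ht : t ≤ 2 * Real.pi) :
    HasSum (fun n : ℕ => (1 - Real.cos (t * n)) / (n : ℝ) ^ 2) (Real.pi * t / 2 - t ^ 2 / 4) := by
  have cosSeries {x : ℝ} (hx : x ∈ Icc (0 : ℝ) 1) :
      HasSum (fun n : ℕ => 1 / (n : ℝ) ^ 2 * Real.cos (2 * Real.pi * n * x))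
        (Real.pi ^ 2 * bernoulliFun 2 x) := by
    convert! hasSum_one_div_nat_pow_mul_cos one_ne_zero hx using 1
    rw [← bernoulliFun, mul_one, Nat.factorial_two]
    push_cast
    ring
  have hx : t / (2 * Real.pi) ∈ Icc (0 : ℝ) 1 :=
    ⟨by positivity, div_le_one_of_le₀ ht (by positivity)⟩
  convert! (cosSeries (left_mem_Icc.2 zero_le_one)).sub (cosSeries hx) using 1
  · ext n
    have hangle : 2 * Real.pi * n * (t / (2 * Real.pi)) = t * n := by field_simp
    rw [hangle, mul_zero, Real.cos_zero]
    ring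
  · simp only [bernoulliFun_two]
    field_simp
    ring

lemma one_sub_cos_le_mul_min (y : ℝ) : 1 - Real.cos y ≤ y * min 2 y / 2 := by
  rcases le_total 2 y with h | h
  · rw [min_eq_left h]
    linarith [Real.neg_one_le_cos y]
  · rw [min_eq_right h]
    linarith [Real.one_sub_sq_div_two_le_cos (x := y)]

lemma abs_log_one_add_sub_one_div_sq_le (n : ℕ) :
    |Real.log (1 + 1 / (n * (n + 2))) - 1 / (n : ℝ) ^ 2| ≤ 2 / (n : ℝ) ^ 3 := by
  rcases eq_or_ne n 0 with rfl | hn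
  · simp
  have hr : (0 : ℝ) < 1 + 1 / (n * (n + 2)) := by positivity
  have lower : 1 / ((n : ℝ) + 1) ^ 2 ≤ Real.log (1 + 1 / (n * (n + 2))) := by
    refine le_of_eq_of_le ?_ (Real.one_sub_inv_le_log_of_pos hr)
    field_simp
    ring
  have upper : Real.log (1 + 1 / (n * (n + 2))) ≤ 1 / (n : ℝ) ^ 2 :=
    calc Real.log (1 + 1 / (n * (n + 2))) ≤ 1 / (n * (n + 2)) := by
          linarith [Real.log_le_sub_one_of_pos hr]
      _ ≤ 1 / (n : ℝ) ^ 2 := by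
          gcongr
          nlinarith
  have gap : 1 / (n : ℝ) ^ 2 - 1 / ((n : ℝ) + 1) ^ 2 ≤ 2 / (n : ℝ) ^ 3 := by
    rw [← sub_nonneg]
    have : 2 / (n : ℝ) ^ 3 - (1 / (n : ℝ) ^ 2 - 1 / ((n : ℝ) + 1) ^ 2) =
        (3 * n + 2) / ((n : ℝ) ^ 3 * (n + 1) ^ 2) := by
      field_simp
      ring
    rw [this]
    positivity
  have : 0 ≤ 2 / (n : ℝ) ^ 3 := by positivity
  rw [abs_le]
  constructor <;> linarith

lemma hasSum_log_one_add_inv_sub {a : ℝ} (ha : 0 ≤ a) :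
    HasSum (fun n : ℕ => Real.log (1 + ((n + 1 : ℕ) : ℝ)⁻¹) - Real.log (1 + ((n + 1 : ℕ) + a)⁻¹))
      (Real.log (1 + a)) := by
  set g : ℕ → ℝ := fun n => Real.log ((n + 1) / (n + 1 + a))
  have hg (n : ℕ) : Real.log (1 + ((n + 1 : ℕ) : ℝ)⁻¹) - Real.log (1 + ((n + 1 : ℕ) + a)⁻¹) =
      g (n + 1) - g n := by
    simp only [g]
    rw [← Real.log_div (by positivity) (by positivity),
      ← Real.log_div (by positivity) (by positivity)]
    congr 1
    push_cast
    field_simp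
    ring
  have hterm (n : ℕ) :
      0 ≤ Real.log (1 + ((n + 1 : ℕ) : ℝ)⁻¹) - Real.log (1 + ((n + 1 : ℕ) + a)⁻¹) := by
    rw [sub_nonneg]
    gcongr
    linarith
  have hlim : Tendsto g atTop (𝓝 0) := by
    have := (((tendsto_natCast_div_add_atTop a).comp (tendsto_add_atTop_nat 1)).log one_ne_zero)
    simpa [g, Function.comp_def] using this
  rw [hasSum_iff_tendsto_nat_of_nonneg hterm]
  simp_rw [hg, Finset.sum_range_sub]
  have hg₀ : g 0 = -Real.log (1 + a) := by simp [g, Real.log_inv]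
  simpa [hg₀] using hlim.sub_const (g 0)

end Series

section GaussMap

lemma measurable_gaussMap : Measurable gaussMap :=
  measurable_fract.comp (measurable_const.div measurable_id)

/-- The first continued fraction digit `⌊1 / x⌋`, as a natural number; the second digit of `x` is
`gaussDigit (gaussMap x)`. On `x ≤ 0` it is the junk value `0`. -/
noncomputable def gaussDigit (x : ℝ) : ℕ := ⌊1 / x⌋₊

variable {a x : ℝ} {n : ℕ}

lemma measurable_gaussDigit : Measurable gaussDigit :=
  Nat.measurable_floor.comp (measurable_const.div measurable_id)

lemma gaussMap_nonneg (x : ℝ) : 0 ≤ gaussMap x := Int.fract_nonneg _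

lemma gaussMap_lt_one (x : ℝ) : gaussMap x < 1 := Int.fract_lt_one _

lemma natCast_gaussDigit (hx : 0 ≤ x) : (gaussDigit x : ℝ) = ⌊1 / x⌋ :=
  natCast_floor_eq_intCast_floor (one_div_nonneg.2 hx)

lemma gaussDigit_add_gaussMap (hx : 0 ≤ x) : gaussDigit x + gaussMap x = x⁻¹ := by
  rw [natCast_gaussDigit hx, gaussMap, Int.floor_add_fract, one_div]

lemma gaussDigit_ne_zero (hx : x ∈ Ioo 0 1) : gaussDigit x ≠ 0 :=
  (Nat.floor_pos.2 ((one_le_div hx.1).2 hx.2.le)).ne'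

lemma gaussDigit_eq_iff (hn : n ≠ 0) :
    gaussDigit x = n ↔ x ∈ Ioc ((n + 1 : ℝ)⁻¹) ((n : ℝ)⁻¹) := by
  have hn' : (0 : ℝ) < n := by positivity
  rw [gaussDigit, Nat.floor_eq_iff' hn, one_div, mem_Ioc]
  rcases le_or_gt x 0 with hx | hx
  · have := inv_nonpos.2 hx
    have : (0 : ℝ) < (n + 1 : ℝ)⁻¹ := by positivity
    constructor <;> rintro ⟨_, _⟩ <;> linarith
  · rw [le_inv_comm₀ hn' hx, inv_lt_comm₀ hx (by positivity), and_comm]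

lemma gaussDigit_preimage_inter_gaussMap_preimage_Iic (hn : n ≠ 0) (ha₀ : 0 ≤ a) (ha₁ : a < 1) :
    gaussDigit ⁻¹' {n} ∩ gaussMap ⁻¹' Iic a = Icc ((n + a)⁻¹) ((n : ℝ)⁻¹) := by
  ext x
  simp only [mem_inter_iff, mem_preimage, mem_singleton_iff, mem_Iic, mem_Icc]
  constructor
  · rintro ⟨hdigit, hmap⟩
    have hx := (gaussDigit_eq_iff hn).1 hdigit
    have hx₀ : 0 < x := lt_trans (by positivity) hx.1
    refine ⟨?_, hx.2⟩
    rw [inv_le_comm₀ (by positivity) hx₀, ← gaussDigit_add_gaussMap hx₀.le, hdigit]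
    gcongr
  · rintro ⟨hlo, hhi⟩
    have hx₀ : 0 < x := lt_of_lt_of_le (by positivity) hlo
    have hdigit : gaussDigit x = n := by
      refine (gaussDigit_eq_iff hn).2 ⟨lt_of_lt_of_le ?_ hlo, hhi⟩
      gcongr
    rw [inv_le_comm₀ (by positivity) hx₀, ← gaussDigit_add_gaussMap hx₀.le, hdigit] at hlo
    exact ⟨hdigit, by linarith⟩

lemma gaussDigit_preimage_inter_second_digit_subset {m : ℕ} (hn : n ≠ 0) (hm : m ≠ 0) :
    gaussDigit ⁻¹' {n} ∩ {x | gaussDigit (gaussMap x) = m} ⊆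
      Icc ((n + (m : ℝ)⁻¹)⁻¹) ((n + (m + 1 : ℝ)⁻¹)⁻¹) := by
  rintro x ⟨hdigit, hdigit₂⟩
  have hx₀ : 0 < x := lt_trans (by positivity) ((gaussDigit_eq_iff hn).1 hdigit).1
  have hmap := (gaussDigit_eq_iff hm).1 hdigit₂
  have hdecomp : x = (n + gaussMap x)⁻¹ := by
    rw [← show gaussDigit x = n from hdigit, gaussDigit_add_gaussMap hx₀.le, inv_inv]
  have := gaussMap_nonneg x
  rw [hdecomp]
  constructor
  · gcongr
    exact hmap.2
  · gcongr
    exact hmap.1.le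

end GaussMap

section GaussMeasure

instance : NullSingletonClass gaussMeasure := by
  unfold gaussMeasure
  infer_instance

lemma ae_mem_Ioo : ∀ᵐ x ∂gaussMeasure, x ∈ Ioo (0 : ℝ) 1 :=
  (withDensity_absolutelyContinuous _ _).ae_le (ae_restrict_mem measurableSet_Ioo)

variable {a b : ℝ}

lemma integral_one_div_one_add_mul_log_two (ha : 0 ≤ a) (hab : a ≤ b) :
    ∫ x in Ioo a b, 1 / ((1 + x) * Real.log 2) =
      (Real.log (1 + b) - Real.log (1 + a)) / Real.log 2 := by
  have h0 : (0 : ℝ) ∉ uIcc (1 + a) (1 + b) := by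
    rw [uIcc_of_le (by linarith)]
    exact fun h => by linarith [h.1]
  rw [← integral_Ioc_eq_integral_Ioo, ← intervalIntegral.integral_of_le hab]
  simp_rw [one_div, mul_inv]
  rw [intervalIntegral.integral_mul_const,
    intervalIntegral.integral_comp_add_left (fun x => x⁻¹), integral_inv h0,
    Real.log_div (by linarith) (by linarith), div_eq_mul_inv]

lemma gaussMeasure_Icc (ha : 0 ≤ a) (hab : a ≤ b) (hb : b ≤ 1) :
    gaussMeasure (Icc a b) =
      ENNReal.ofReal ((Real.log (1 + b) - Real.log (1 + a)) / Real.log 2) := by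
  have hpos {x : ℝ} (hx : x ∈ Icc a b) : 0 < 1 + x := by linarith [hx.1]
  have hcont : ContinuousOn (fun x : ℝ => 1 / ((1 + x) * Real.log 2)) (Icc a b) :=
    continuousOn_const.div (by fun_prop) fun x hx => by
      have := hpos hx
      positivity
  rw [← measure_congr Ioo_ae_eq_Icc, gaussMeasure, withDensity_apply _ measurableSet_Ioo,
    Measure.restrict_restrict measurableSet_Ioo, inter_eq_left.2 (Ioo_subset_Ioo ha hb),
    ← integral_one_div_one_add_mul_log_two ha hab, ofReal_integral_eq_lintegral_ofReal]
  · exact hcont.integrableOn_Icc.mono_set Ioo_subset_Icc_self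
  · filter_upwards [ae_restrict_mem measurableSet_Ioo] with x hx
    have := hpos (Ioo_subset_Icc_self hx)
    simp only [Pi.zero_apply]
    positivity

instance : IsProbabilityMeasure gaussMeasure where
  measure_univ := by
    have huniv : gaussMeasure univ = gaussMeasure (Icc 0 1) := measure_congr <|
      eventuallyEq_set.2 <| ae_mem_Ioo.mono fun x hx => by simp [hx.1.le, hx.2.le]
    have : (0:ℝ) < Real.log 2 := by positivity
    rw [huniv, gaussMeasure_Icc le_rfl zero_le_one le_rfl, add_zero, Real.log_one, sub_zero,
      one_add_one_eq_two, div_self this.ne', ENNReal.ofReal_one]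

lemma measureReal_gaussMeasure_Icc (ha : 0 ≤ a) (hab : a ≤ b) (hb : b ≤ 1) :
    gaussMeasure.real (Icc a b) = (Real.log (1 + b) - Real.log (1 + a)) / Real.log 2 := by
  rw [measureReal_def, gaussMeasure_Icc ha hab hb, ENNReal.toReal_ofReal]
  have : Real.log (1 + a) ≤ Real.log (1 + b) := Real.log_le_log (by linarith) (by linarith)
  exact div_nonneg (sub_nonneg.2 this) (by positivity)

lemma measureReal_gaussMeasure_Icc_le (ha : 0 ≤ a) (hab : a ≤ b) (hb : b ≤ 1) :
    gaussMeasure.real (Icc a b) ≤ (b - a) / Real.log 2 := by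
  rw [measureReal_gaussMeasure_Icc ha hab hb]
  refine div_le_div_of_nonneg_right ?_ (by positivity)
  calc Real.log (1 + b) - Real.log (1 + a) = Real.log ((1 + b) / (1 + a)) :=
        (Real.log_div (by linarith) (by linarith)).symm
    _ ≤ (1 + b) / (1 + a) - 1 := Real.log_le_sub_one_of_pos (div_pos (by linarith) (by linarith))
    _ = (b - a) / (1 + a) := by
        rw [div_sub_one (by linarith)]
        ring
    _ ≤ b - a := div_le_self (sub_nonneg.2 hab) (by linarith)

lemma gaussMeasure_gaussDigit_preimage_zero : gaussMeasure (gaussDigit ⁻¹' {0}) = 0 := by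
  rw [measure_eq_zero_iff_ae_notMem]
  filter_upwards [ae_mem_Ioo] with x hx using gaussDigit_ne_zero hx

lemma measureReal_gaussMap_preimage_Iic (ha₀ : 0 ≤ a) (ha₁ : a < 1) :
    gaussMeasure.real (gaussMap ⁻¹' Iic a) = Real.log (1 + a) / Real.log 2 := by
  have hcells := hasSum_measureReal_preimage_singleton_inter (μ := gaussMeasure)
    measurable_gaussDigit (measurable_gaussMap measurableSet_Iic : MeasurableSet (_ ⁻¹' Iic a))
  have hzero : gaussMeasure.real (gaussDigit ⁻¹' {0} ∩ gaussMap ⁻¹' Iic a) = 0 := by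
    rw [measureReal_def, measure_inter_null_of_null_left _ gaussMeasure_gaussDigit_preimage_zero,
      ENNReal.toReal_zero]
  rw [← hasSum_nat_add_iff' 1, Finset.sum_range_one, hzero, sub_zero] at hcells
  refine hcells.unique ?_
  convert! (hasSum_log_one_add_inv_sub ha₀).div_const (Real.log 2) using 2 with n
  rw [gaussDigit_preimage_inter_gaussMap_preimage_Iic n.succ_ne_zero ha₀ ha₁,
    measureReal_gaussMeasure_Icc (by positivity)]
  · gcongr
    linarith
  · exact inv_le_one_of_one_le₀ (by simp)

lemma measureReal_gaussMeasure_Iic (ha₀ : 0 ≤ a) (ha₁ : a ≤ 1) :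
    gaussMeasure.real (Iic a) = Real.log (1 + a) / Real.log 2 := by
  have hIcc : Iic a =ᵐ[gaussMeasure] Icc 0 a :=
    eventuallyEq_set.2 <| ae_mem_Ioo.mono fun x hx => by simp [hx.1.le]
  rw [measureReal_congr hIcc, measureReal_gaussMeasure_Icc le_rfl ha₀ ha₁, add_zero,
    Real.log_one, sub_zero]

theorem measurePreserving_gaussMap : MeasurePreserving gaussMap gaussMeasure gaussMeasure := by
  refine ⟨measurable_gaussMap, (Measure.ext_of_Iic _ _ fun a => ?_).symm⟩
  rw [Measure.map_apply measurable_gaussMap measurableSet_Iic]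
  rcases lt_or_ge a 0 with ha₀ | ha₀
  · refine measure_congr <| eventuallyEq_set.2 <| ae_mem_Ioo.mono fun x hx => ?_
    exact iff_of_false (ha₀.trans hx.1).not_ge (ha₀.trans_le (gaussMap_nonneg x)).not_ge
  rcases lt_or_ge a 1 with ha₁ | ha₁
  · rw [← measureReal_eq_measureReal_iff, measureReal_gaussMeasure_Iic ha₀ ha₁.le,
      measureReal_gaussMap_preimage_Iic ha₀ ha₁]
  · refine measure_congr <| eventuallyEq_set.2 <| ae_mem_Ioo.mono fun x hx => ?_
    exact iff_of_true (hx.2.le.trans ha₁) ((gaussMap_lt_one x).le.trans ha₁)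

theorem measureReal_gaussDigit_preimage_singleton (n : ℕ) :
    gaussMeasure.real (gaussDigit ⁻¹' {n}) =
      Real.log (1 + 1 / (n * (n + 2))) / Real.log 2 := by
  rcases eq_or_ne n 0 with rfl | hn
  · simp [measureReal_def, gaussMeasure_gaussDigit_preimage_zero]
  have hn₁ : (1 : ℝ) ≤ n := by exact_mod_cast Nat.one_le_iff_ne_zero.2 hn
  have hcell : gaussDigit ⁻¹' {n} = Ioc ((n + 1 : ℝ)⁻¹) ((n : ℝ)⁻¹) :=
    Set.ext fun x => gaussDigit_eq_iff hn
  rw [hcell, measureReal_congr Ioc_ae_eq_Icc, measureReal_gaussMeasure_Icc (by positivity)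
    (by gcongr; linarith) (inv_le_one_of_one_le₀ hn₁),
    ← Real.log_div (by positivity) (by positivity)]
  congr 2
  field_simp
  ring

-- If `n = 0` or `m = 0` the right-hand side is the junk value `0`: almost every digit is positive.
lemma measureReal_two_gaussDigits_le (n m : ℕ) :
    gaussMeasure.real (gaussDigit ⁻¹' {n} ∩ {x | gaussDigit (gaussMap x) = m}) ≤
      1 / (n : ℝ) ^ 2 * (1 / (m : ℝ) ^ 2) / Real.log 2 := by
  have hzero {s : Set ℝ} (hs : gaussMeasure s = 0) :
      gaussMeasure.real s ≤ 1 / (n : ℝ) ^ 2 * (1 / (m : ℝ) ^ 2) / Real.log 2 := by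
    rw [measureReal_def, hs, ENNReal.toReal_zero]
    positivity
  rcases eq_or_ne n 0 with rfl | hn
  · exact hzero (measure_inter_null_of_null_left _ gaussMeasure_gaussDigit_preimage_zero)
  rcases eq_or_ne m 0 with rfl | hm
  · exact hzero (measure_inter_null_of_null_right _ <|
      measurePreserving_gaussMap.quasiMeasurePreserving.preimage_null
        gaussMeasure_gaussDigit_preimage_zero)
  have hn₁ : (1 : ℝ) ≤ n := by exact_mod_cast Nat.one_le_iff_ne_zero.2 hn
  have hm₀ : (0 : ℝ) < m := by positivity
  calc gaussMeasure.real (gaussDigit ⁻¹' {n} ∩ {x | gaussDigit (gaussMap x) = m})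
      ≤ gaussMeasure.real (Icc ((n + (m : ℝ)⁻¹)⁻¹) ((n + (m + 1 : ℝ)⁻¹)⁻¹)) :=
        measureReal_mono (gaussDigit_preimage_inter_second_digit_subset hn hm)
    _ ≤ ((n + (m + 1 : ℝ)⁻¹)⁻¹ - (n + (m : ℝ)⁻¹)⁻¹) / Real.log 2 :=
        measureReal_gaussMeasure_Icc_le (by positivity) (by gcongr; linarith)
          (inv_le_one_of_one_le₀ (le_add_of_le_of_nonneg hn₁ (by positivity)))
    _ = 1 / ((n + (m : ℝ)⁻¹) * (n + (m + 1 : ℝ)⁻¹)) * (1 / (m * (m + 1))) / Real.log 2 := by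
        congr 1
        field_simp
        ring
    _ ≤ 1 / (n : ℝ) ^ 2 * (1 / (m : ℝ) ^ 2) / Real.log 2 := by
        have : (n : ℝ) ^ 2 ≤ (n + (m : ℝ)⁻¹) * (n + (m + 1 : ℝ)⁻¹) := by
          rw [sq]
          gcongr <;> exact le_add_of_nonneg_right (by positivity)
        have : (m : ℝ) ^ 2 ≤ m * (m + 1) := by nlinarith
        gcongr

end GaussMeasure

section DigitIntegrals

lemma norm_integral_two_gaussDigits_le {f g : ℕ → ℂ}
    (hf : Summable fun n : ℕ => ‖f n‖ / (n : ℝ) ^ 2)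
    (hg : Summable fun n : ℕ => ‖g n‖ / (n : ℝ) ^ 2) :
    ‖∫ x, f (gaussDigit x) * g (gaussDigit (gaussMap x)) ∂gaussMeasure‖ ≤
      (∑' n : ℕ, ‖f n‖ / (n : ℝ) ^ 2) * (∑' n : ℕ, ‖g n‖ / (n : ℝ) ^ 2) / Real.log 2 := by
  have hfg := hf.mul_of_nonneg hg (fun _ => by positivity) fun _ => by positivity
  rw [hf.tsum_mul_tsum hg hfg, ← tsum_div_const]
  refine norm_integral_comp_le_tsum (Z := fun x => (gaussDigit x, gaussDigit (gaussMap x)))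
    (F := fun d => f d.1 * g d.2)
    (measurable_gaussDigit.prodMk (measurable_gaussDigit.comp measurable_gaussMap))
    (hfg.div_const _) fun ⟨n, m⟩ => ?_
  have hpreimage : (fun x => (gaussDigit x, gaussDigit (gaussMap x))) ⁻¹' {(n, m)} =
      gaussDigit ⁻¹' {n} ∩ {x | gaussDigit (gaussMap x) = m} := by
    ext x
    simp
  rw [hpreimage, norm_mul]
  grw [measureReal_two_gaussDigits_le]
  exact le_of_eq (by ring)

lemma integral_comp_gaussDigit {f : ℕ → ℝ} {C : ℝ} (hf : ∀ n, ‖f n‖ ≤ C) :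
    ∫ x, f (gaussDigit x) ∂gaussMeasure =
      (∑' n : ℕ, Real.log (1 + 1 / (n * (n + 2))) * f n) / Real.log 2 := by
  have hint : Integrable (fun x => f (gaussDigit x)) gaussMeasure :=
    .of_bound (StronglyMeasurable.of_discrete.comp_measurable
      measurable_gaussDigit).aestronglyMeasurable C (.of_forall fun _ => hf _)
  rw [integral_comp_eq_tsum measurable_gaussDigit hint, ← tsum_div_const]
  simp_rw [measureReal_gaussDigit_preimage_singleton, smul_eq_mul, div_mul_eq_mul_div]

lemma abs_log_one_add_sub_mul_one_sub_cos_le (t : ℝ) (n : ℕ) :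
    |(Real.log (1 + 1 / (n * (n + 2))) - 1 / (n : ℝ) ^ 2) * (1 - Real.cos (t * n))| ≤
      t * (min 2 (t * n) / (n : ℝ) ^ 2) := by
  rw [abs_mul, abs_of_nonneg (sub_nonneg.2 (Real.cos_le_one _))]
  calc _ ≤ 2 / (n : ℝ) ^ 3 * (t * n * min 2 (t * n) / 2) :=
        mul_le_mul (abs_log_one_add_sub_one_div_sq_le n) (one_sub_cos_le_mul_min _)
          (sub_nonneg.2 (Real.cos_le_one _)) (by positivity)
    _ = t * (min 2 (t * n) / (n : ℝ) ^ 2) := by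
        rcases eq_or_ne n 0 with rfl | hn
        · simp
        · field_simp

variable {t : ℝ}

lemma abs_tsum_log_one_add_mul_one_sub_cos_sub_le (ht : 0 < t) (hte : t ≤ Real.exp (-1)) :
    |∑' n : ℕ, Real.log (1 + 1 / (n * (n + 2))) * (1 - Real.cos (t * n)) - Real.pi * t / 2| ≤
      7 * t.negMulLog ^ 2 := by
  have ht₁ : t ≤ 1 := hte.trans (Real.exp_le_one_iff.2 (by norm_num))
  have htL := le_negMulLog ht hte
  set err : ℕ → ℝ := fun n =>
    (Real.log (1 + 1 / (n * (n + 2))) - 1 / (n : ℝ) ^ 2) * (1 - Real.cos (t * n))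
  have hmajorant := (summable_min_mul_div_sq zero_le_two ht ht₁).mul_left t
  have herr : Summable err :=
    .of_norm_bounded hmajorant (abs_log_one_add_sub_mul_one_sub_cos_le t)
  have herr_le : |∑' n, err n| ≤ t * (6 * t.negMulLog) := by
    refine (tsum_of_norm_bounded (f := err) hmajorant.hasSum
      (abs_log_one_add_sub_mul_one_sub_cos_le t)).trans ?_
    rw [tsum_mul_left]
    gcongr
    exact tsum_min_two_mul_div_sq_le ht hte
  have hsum : ∑' n : ℕ, Real.log (1 + 1 / (n * (n + 2))) * (1 - Real.cos (t * n)) =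
      ∑' n, err n + (Real.pi * t / 2 - t ^ 2 / 4) := by
    rw [← (herr.hasSum.add
      (hasSum_one_sub_cos_div_sq ht.le (by linarith [Real.pi_gt_three]))).tsum_eq]
    exact tsum_congr fun n => by ring
  rw [hsum]
  obtain ⟨hlo, hhi⟩ := abs_le.1 herr_le
  rw [abs_le]
  constructor <;> nlinarith

lemma abs_integral_one_sub_cos_gaussDigit_sub_le (ht : 0 < t) (hte : t ≤ Real.exp (-1)) :
    |∫ x, (1 - Real.cos (t * gaussDigit x)) ∂gaussMeasure - Real.pi * t / 2 / Real.log 2| ≤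
      7 * t.negMulLog ^ 2 / Real.log 2 := by
  have hbdd (n : ℕ) : ‖1 - Real.cos (t * n)‖ ≤ 2 := by
    rw [Real.norm_eq_abs, abs_le]
    constructor <;> linarith [Real.cos_le_one (t * n), Real.neg_one_le_cos (t * n)]
  have hlog : (0 : ℝ) < Real.log 2 := by positivity
  rw [integral_comp_gaussDigit (f := fun n => 1 - Real.cos (t * n)) hbdd, ← sub_div, abs_div,
    abs_of_pos hlog]
  gcongr
  exact abs_tsum_log_one_add_mul_one_sub_cos_sub_le ht hte

end DigitIntegrals

section CharacteristicFunction

/-- The deviation `e^{iθ} - 1` of the character `e^{iθ}` from its value at `θ = 0`. -/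
noncomputable def charDev (θ : ℝ) : ℂ := Complex.exp (Complex.I * θ) - 1

lemma continuous_charDev : Continuous charDev := by
  unfold charDev
  fun_prop

lemma norm_charDev_le (θ : ℝ) : ‖charDev θ‖ ≤ min 2 |θ| := by
  refine le_min ?_ Real.norm_exp_I_mul_ofReal_sub_one_le
  refine (norm_sub_le _ _).trans_eq ?_
  rw [Complex.norm_exp_I_mul_ofReal, norm_one, one_add_one_eq_two]

lemma exp_I_mul_add_sub_one (θ η : ℝ) :
    Complex.exp (Complex.I * (θ + η : ℝ)) - 1 =
      charDev θ * charDev η + (charDev θ + charDev η) := by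
  rw [charDev, charDev, Complex.ofReal_add, mul_add, Complex.exp_add]
  ring

lemma charDev_add_charDev_neg (θ : ℝ) :
    charDev θ + charDev (-θ) = ((-2 * (1 - Real.cos θ) : ℝ) : ℂ) := by
  have hcos := Complex.two_cos (θ : ℂ)
  rw [charDev, charDev, mul_comm, mul_comm Complex.I]
  push_cast
  linear_combination -hcos

variable {α : Type*} [MeasurableSpace α] {μ : Measure α} [IsFiniteMeasure μ] {T : α → α} {Z : α → ℝ}

lemma integrable_charDev_comp (hZ : Measurable Z) : Integrable (fun x => charDev (Z x)) μ :=
  .of_bound (continuous_charDev.measurable.comp hZ).aestronglyMeasurable 2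
    (.of_forall fun _ => (norm_charDev_le _).trans (min_le_left _ _))

lemma integral_charDev_add_charDev_neg_comp (hT : MeasurePreserving T μ μ) (hZ : Measurable Z) :
    ∫ x, (charDev (Z x) + charDev (-Z (T x))) ∂μ =
      ((-2 * ∫ x, (1 - Real.cos (Z x)) ∂μ : ℝ) : ℂ) := by
  have hpos : Integrable (fun x => charDev (Z x)) μ := integrable_charDev_comp hZ
  have hneg : Integrable (fun x => charDev (-Z x)) μ := integrable_charDev_comp hZ.neg
  have hneg_comp : Integrable (fun x => charDev (-Z (T x))) μ :=
    integrable_charDev_comp (hZ.comp hT.measurable).neg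
  have hinv : ∫ x, charDev (-Z (T x)) ∂μ = ∫ x, charDev (-Z x) ∂μ := by
    conv_rhs => rw [← hT.map_eq]
    exact (integral_map hT.measurable.aemeasurable
      (continuous_charDev.measurable.comp hZ.neg).aestronglyMeasurable).symm
  rw [integral_add hpos hneg_comp, hinv, ← integral_add hpos hneg, ← integral_const_mul,
    ← integral_complex_ofReal]
  simp_rw [charDev_add_charDev_neg]

lemma integral_exp_sub_comp_sub_one (hT : MeasurePreserving T μ μ) (hZ : Measurable Z) :
    ∫ x, (Complex.exp (Complex.I * (Z x - Z (T x) : ℝ)) - 1) ∂μ =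
      ∫ x, charDev (Z x) * charDev (-Z (T x)) ∂μ +
        ((-2 * ∫ x, (1 - Real.cos (Z x)) ∂μ : ℝ) : ℂ) := by
  have hpos : Integrable (fun x => charDev (Z x)) μ := integrable_charDev_comp hZ
  have hneg : Integrable (fun x => charDev (-Z (T x))) μ :=
    integrable_charDev_comp (hZ.comp hT.measurable).neg
  have hmul : Integrable (fun x => charDev (Z x) * charDev (-Z (T x))) μ :=
    hneg.bdd_mul hpos.aestronglyMeasurable
      (.of_forall fun _ => (norm_charDev_le _).trans (min_le_left _ _))
  simp_rw [← integral_charDev_add_charDev_neg_comp hT hZ, sub_eq_add_neg (Z _),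
    exp_I_mul_add_sub_one]
  exact integral_add hmul (hpos.add hneg)

variable {t : ℝ}

lemma norm_integral_charDev_mul_charDev_le (ht : 0 < t) (hte : t ≤ Real.exp (-1)) :
    ‖∫ x, charDev (t * gaussDigit x) * charDev (-(t * gaussDigit (gaussMap x))) ∂gaussMeasure‖ ≤
      36 * t.negMulLog ^ 2 / Real.log 2 := by
  have ht₁ : t ≤ 1 := hte.trans (Real.exp_le_one_iff.2 (by norm_num))
  have hpoint {f : ℕ → ℂ} (hf : ∀ n : ℕ, ‖f n‖ ≤ min 2 (t * n)) :
      (Summable fun n : ℕ => ‖f n‖ / (n : ℝ) ^ 2) ∧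
        ∑' n : ℕ, ‖f n‖ / (n : ℝ) ^ 2 ≤ 6 * t.negMulLog := by
    have hmin := summable_min_mul_div_sq zero_le_two ht ht₁
    have hle (n : ℕ) : ‖f n‖ / (n : ℝ) ^ 2 ≤ min 2 (t * n) / (n : ℝ) ^ 2 := by
      grw [hf n]
    have hsummable := hmin.of_nonneg_of_le (fun _ => by positivity) hle
    exact ⟨hsummable, (hsummable.tsum_le_tsum hle hmin).trans (tsum_min_two_mul_div_sq_le ht hte)⟩
  obtain ⟨hs₁, hle₁⟩ := hpoint (f := fun n => charDev (t * n)) fun n => by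
    simpa only [abs_of_nonneg (by positivity : 0 ≤ t * n)] using norm_charDev_le (t * n)
  obtain ⟨hs₂, hle₂⟩ := hpoint (f := fun n => charDev (-(t * n))) fun n => by
    simpa only [abs_neg, abs_of_nonneg (by positivity : 0 ≤ t * n)] using norm_charDev_le (-(t * n))
  have hL := Real.negMulLog_nonneg ht.le ht₁
  calc _ ≤ _ := norm_integral_two_gaussDigits_le hs₁ hs₂
    _ ≤ 6 * t.negMulLog * (6 * t.negMulLog) / Real.log 2 := by
        gcongr
    _ = 36 * t.negMulLog ^ 2 / Real.log 2 := by ring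

lemma integral_exp_floor_sub_floor_sub_one (t : ℝ) :
    ∫ x, (Complex.exp (Complex.I * (t : ℂ) *
        (((⌊1 / x⌋ : ℝ) - (⌊1 / gaussMap x⌋ : ℝ) : ℝ) : ℂ)) - 1) ∂gaussMeasure =
      ∫ x, charDev (t * gaussDigit x) * charDev (-(t * gaussDigit (gaussMap x))) ∂gaussMeasure +
        ((-2 * ∫ x, (1 - Real.cos (t * gaussDigit x)) ∂gaussMeasure : ℝ) : ℂ) := by
  have hdigit : Measurable fun x => t * (gaussDigit x : ℝ) :=
    (measurable_from_nat.comp measurable_gaussDigit).const_mul t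
  rw [← integral_exp_sub_comp_sub_one measurePreserving_gaussMap hdigit]
  refine integral_congr_ae ?_
  filter_upwards [ae_mem_Ioo] with x hx
  rw [← natCast_gaussDigit hx.1.le, ← natCast_gaussDigit (gaussMap_nonneg x), ← mul_sub,
    Complex.ofReal_mul, mul_assoc]

end CharacteristicFunction

end GaussKuzmin

theorem stmt_16 : ∃ C > (0:ℝ), ∃ t₀ > (0:ℝ), ∀ t : ℝ, 0 < t → t < t₀ →
    ‖(∫ x, (Complex.exp (Complex.I * (t : ℂ) *
          (((⌊1 / x⌋ : ℝ) - (⌊1 / gaussMap x⌋ : ℝ) : ℝ) : ℂ)) - 1) ∂gaussMeasure) -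
        ((-(Real.pi / Real.log 2) * t : ℝ) : ℂ)‖ ≤
      C * t ^ 2 * (Real.log t) ^ 2 := by
  refine ⟨50 / Real.log 2, by positivity, Real.exp (-1), Real.exp_pos _, fun t ht hte => ?_⟩
  set cosIntegral := ∫ x, (1 - Real.cos (t * GaussKuzmin.gaussDigit x)) ∂gaussMeasure
  have hproduct := GaussKuzmin.norm_integral_charDev_mul_charDev_le ht hte.le
  have hlinear : ‖((-2 * cosIntegral : ℝ) : ℂ) - ((-(Real.pi / Real.log 2) * t : ℝ) : ℂ)‖ ≤
      2 * (7 * t.negMulLog ^ 2 / Real.log 2) := by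
    rw [← Complex.ofReal_sub, Complex.norm_real, Real.norm_eq_abs]
    have hcos := GaussKuzmin.abs_integral_one_sub_cos_gaussDigit_sub_le ht hte.le
    have hfactor : -2 * cosIntegral - -(Real.pi / Real.log 2) * t =
        -2 * (cosIntegral - Real.pi * t / 2 / Real.log 2) := by ring
    rw [hfactor, abs_mul, abs_neg, abs_two]
    gcongr
  rw [GaussKuzmin.integral_exp_floor_sub_floor_sub_one, add_sub_assoc]
  calc _ ≤ 36 * t.negMulLog ^ 2 / Real.log 2 + 2 * (7 * t.negMulLog ^ 2 / Real.log 2) :=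
        norm_add_le_of_le hproduct hlinear
    _ = 50 / Real.log 2 * t ^ 2 * Real.log t ^ 2 := by
        rw [Real.negMulLog]
        ring
end

section
/- Let λ ∈ (1/2, 1) ∪ (1, ∞) and φ_λ(x) = ⌊1/x⌋^λ on (0,1), with μ the Gauss–Kuzmin measure. Then as t → 0⁺, ∫₀¹ (e^{itφ_λ(x)} − 1) dμ(x) = 1_{λ<1}·i c₁ t + c_* t^{1/λ} + O_ε(t^{1/λ} |log t|^{−1+ε}) for every ε ∈ (0,1), where c_* = −exp(−πi/(2λ)) Γ(1 − 1/λ)/log 2 and, when λ < 1, c₁ = ∫₀¹ ⌊1/x⌋^λ dμ(x). -/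
open MeasureTheory

/-!
Write `R k` for the remainder `exp z - ∑_{j < k} z ^ j / j!`, let `α = 1 / λ` and let
`k < α < k + 1`, so that `k = 1` for `λ < 1` and `k = 0` for `λ > 1`. Subtracting the `k` finite
moments, one has to expand `∫ R (k + 1) (i t ⌊1/x⌋ ^ λ) dμ`. Up to the factor `1 / log 2` its main
term is `∫ R (k + 1) (i t x ^ (-λ)) dx` over `(0, ∞)`, a constant times `t ^ α` by scaling. The
constant is a value of the Mellin transform of `x ↦ R (k + 1) (-r x)`, which is `r ^ (-s) Γ(s)` for
`0 < re r` (integrate by parts down to `k = 0`, then continue analytically from `r > 0`) and by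
continuity also at `r = -i`.

Since `|R (k + 1) z| ≤ 2 |z| ^ β` for every `β ∈ [k, k + 1]` on the left half-plane, with a matching
Hölder estimate for differences, removing the floor, the weight `1 / (1 + x)` and the range
`x > 1` each costs `O(t ^ β)`, provided `β` is slightly larger than `α`. This power saving beats
every power of `log t`.
-/

section

open Complex Set Filter Asymptotics
open scoped Topology Nat

/-- The exponential series without its first `k` terms, so that the mean of
`expRemainder (k + 1) (I * t * X)` is the characteristic function of `X` with the moments of order
at most `k` removed. -/
noncomputable def expRemainder (k : ℕ) (z : ℂ) : ℂ :=
  exp z - ∑ j ∈ Finset.range k, z ^ j / (j ! : ℂ)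

theorem expRemainder_zero (z : ℂ) : expRemainder 0 z = exp z := by
  simp [expRemainder]

theorem expRemainder_succ (k : ℕ) (z : ℂ) :
    expRemainder (k + 1) z = expRemainder k z - z ^ k / (k ! : ℂ) := by
  simp only [expRemainder, Finset.sum_range_succ, sub_sub]

theorem expRemainder_succ_apply_zero (k : ℕ) : expRemainder (k + 1) 0 = 0 := by
  simp [expRemainder, Finset.sum_range_succ']

theorem hasDerivAt_expRemainder_succ (k : ℕ) (z : ℂ) :
    HasDerivAt (expRemainder (k + 1)) (expRemainder k z) z := by
  induction k with
  | zero => simpa [funext (expRemainder_succ 0), funext expRemainder_zero, expRemainder_zero]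
      using (hasDerivAt_exp z).sub_const 1
  | succ k ih =>
    have hpow : HasDerivAt (fun w : ℂ => w ^ (k + 1) / ((k + 1)! : ℂ)) (z ^ k / (k ! : ℂ)) z := by
      refine ((hasDerivAt_pow (k + 1) z).div_const _).congr_deriv ?_
      rw [Nat.factorial_succ]
      push_cast
      field_simp
    rw [funext (expRemainder_succ (k + 1)), expRemainder_succ k z]
    exact ih.sub hpow

@[fun_prop]
theorem continuous_expRemainder (k : ℕ) : Continuous (expRemainder k) := by
  unfold expRemainder
  fun_prop

theorem norm_expRemainder_succ_sub_le {k : ℕ} {R C : ℝ} {v w : ℂ}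
    (hC : ∀ z : ℂ, z.re ≤ 0 → ‖z‖ ≤ R → ‖expRemainder k z‖ ≤ C)
    (hv : v.re ≤ 0) (hvR : ‖v‖ ≤ R) (hw : w.re ≤ 0) (hwR : ‖w‖ ≤ R) :
    ‖expRemainder (k + 1) v - expRemainder (k + 1) w‖ ≤ C * ‖v - w‖ := by
  have hconvex : Convex ℝ ({z : ℂ | z.re ≤ 0} ∩ Metric.closedBall 0 R) :=
    (convex_halfSpace_re_le 0).inter (convex_closedBall 0 R)
  exact hconvex.norm_image_sub_le_of_norm_hasDerivWithin_le
    (fun z _ => (hasDerivAt_expRemainder_succ k z).hasDerivWithinAt)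
    (fun z hz => hC z hz.1 (mem_closedBall_zero_iff.1 hz.2))
    ⟨hw, mem_closedBall_zero_iff.2 hwR⟩ ⟨hv, mem_closedBall_zero_iff.2 hvR⟩

theorem norm_exp_le_one {z : ℂ} (hz : z.re ≤ 0) : ‖exp z‖ ≤ 1 := by
  rwa [norm_exp, Real.exp_le_one_iff]

theorem norm_expRemainder_le_pow (k : ℕ) {z : ℂ} (hz : z.re ≤ 0) :
    ‖expRemainder k z‖ ≤ ‖z‖ ^ k := by
  induction k generalizing z with
  | zero => simpa [expRemainder_zero] using norm_exp_le_one hz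
  | succ k ih =>
    have h := norm_expRemainder_succ_sub_le (R := ‖z‖) (C := ‖z‖ ^ k) (w := 0)
      (fun w hw hwR => (ih hw).trans (by gcongr)) hz le_rfl le_rfl (by simp)
    simpa [expRemainder_succ_apply_zero, pow_succ] using h

theorem norm_expRemainder_succ_le_pow (k : ℕ) {z : ℂ} (hz : z.re ≤ 0) :
    ‖expRemainder (k + 1) z‖ ≤ 2 * ‖z‖ ^ k := by
  have hterm : ‖z ^ k / (k ! : ℂ)‖ ≤ ‖z‖ ^ k := by
    rw [norm_div, norm_pow, norm_natCast]
    exact div_le_self (by positivity) (mod_cast Nat.one_le_iff_ne_zero.2 k.factorial_ne_zero)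
  rw [expRemainder_succ]
  linarith [norm_sub_le (expRemainder k z) (z ^ k / (k ! : ℂ)), norm_expRemainder_le_pow k hz]

theorem min_pow_pow_succ_le_rpow {k : ℕ} {x β : ℝ} (hx : 0 ≤ x) (hkβ : k ≤ β) (hβk : β ≤ k + 1) :
    min (x ^ k) (x ^ (k + 1)) ≤ x ^ β := by
  have hβ : 0 ≤ β := k.cast_nonneg.trans hkβ
  rcases le_total x 1 with hx1 | hx1
  · refine (min_le_right _ _).trans ?_
    rw [← Real.rpow_natCast]
    exact Real.rpow_le_rpow_of_exponent_ge' hx hx1 hβ (by push_cast; exact hβk)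
  · refine (min_le_left _ _).trans ?_
    rw [← Real.rpow_natCast]
    exact Real.rpow_le_rpow_of_exponent_le hx1 hkβ

theorem norm_expRemainder_succ_le_min (k : ℕ) {z : ℂ} (hz : z.re ≤ 0) :
    ‖expRemainder (k + 1) z‖ ≤ 2 * min (‖z‖ ^ k) (‖z‖ ^ (k + 1)) := by
  rw [mul_min_of_nonneg _ _ zero_le_two]
  refine le_min (norm_expRemainder_succ_le_pow k hz) ?_
  exact (norm_expRemainder_le_pow (k + 1) hz).trans
    (le_mul_of_one_le_left (by positivity) one_le_two)

theorem norm_expRemainder_succ_le_rpow {k : ℕ} {β : ℝ} (hkβ : k ≤ β) (hβk : β ≤ k + 1)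
    {z : ℂ} (hz : z.re ≤ 0) : ‖expRemainder (k + 1) z‖ ≤ 2 * ‖z‖ ^ β := by
  refine (norm_expRemainder_succ_le_min k hz).trans ?_
  gcongr
  exact min_pow_pow_succ_le_rpow (norm_nonneg z) hkβ hβk

theorem norm_exp_sub_exp_le_rpow {β : ℝ} (hβ : 0 ≤ β) (hβ1 : β ≤ 1) {v w : ℂ}
    (hv : v.re ≤ 0) (hw : w.re ≤ 0) : ‖exp v - exp w‖ ≤ 2 * ‖v - w‖ ^ β := by
  have hlip : ‖exp v - exp w‖ ≤ ‖v - w‖ := by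
    have h := norm_expRemainder_succ_sub_le (k := 0) (R := max ‖v‖ ‖w‖) (C := 1)
      (fun z hz _ => by simpa using norm_expRemainder_le_pow 0 hz)
      hv (le_max_left _ _) hw (le_max_right _ _)
    simpa [expRemainder_succ, expRemainder_zero] using h
  have hbdd : ‖exp v - exp w‖ ≤ 2 := by
    linarith [norm_sub_le (exp v) (exp w), norm_exp_le_one hv, norm_exp_le_one hw]
  calc ‖exp v - exp w‖ ≤ 2 * min (‖v - w‖ ^ 0) (‖v - w‖ ^ (0 + 1)) := by
        rw [mul_min_of_nonneg _ _ zero_le_two]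
        refine le_min (by simpa using hbdd) ?_
        rw [zero_add, pow_one]
        linarith [norm_nonneg (v - w)]
    _ ≤ 2 * ‖v - w‖ ^ β := by
        gcongr
        exact min_pow_pow_succ_le_rpow (norm_nonneg _) (by simpa using hβ) (by simpa using hβ1)

theorem norm_expRemainder_succ_sub_le_rpow {k : ℕ} {β : ℝ} (hkβ : k ≤ β) (hβk : β ≤ k + 1)
    {R : ℝ} {v w : ℂ} (hv : v.re ≤ 0) (hvR : ‖v‖ ≤ R) (hw : w.re ≤ 0) (hwR : ‖w‖ ≤ R) :
    ‖expRemainder (k + 1) v - expRemainder (k + 1) w‖ ≤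
      2 * R ^ (β - min β 1) * ‖v - w‖ ^ min β 1 := by
  cases k with
  | zero =>
    have hβ0 : 0 ≤ β := by simpa using hkβ
    have hβ1 : β ≤ 1 := by simpa using hβk
    simpa [expRemainder_succ, expRemainder_zero, hβ1] using norm_exp_sub_exp_le_rpow hβ0 hβ1 hv hw
  | succ k =>
    push_cast at hkβ hβk
    have hβ1 : 1 ≤ β := by linarith [k.cast_nonneg (α := ℝ)]
    rw [min_eq_right hβ1, Real.rpow_one]
    refine norm_expRemainder_succ_sub_le (fun z hz hzR => ?_) hv hvR hw hwR
    refine (norm_expRemainder_succ_le_rpow (β := β - 1) (by linarith) (by linarith) hz).trans ?_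
    gcongr

theorem re_neg_mul_ofReal_nonpos {r : ℂ} (hr : 0 ≤ r.re) {x : ℝ} (hx : 0 ≤ x) :
    (-(r * x)).re ≤ 0 := by
  simpa using mul_nonneg hr hx

theorem norm_neg_mul_ofReal (r : ℂ) {x : ℝ} (hx : 0 ≤ x) : ‖-(r * x)‖ = ‖r‖ * x := by
  rw [norm_neg, norm_mul, norm_real, Real.norm_of_nonneg hx]

theorem hasDerivAt_neg_mul_ofReal (r : ℂ) (x : ℝ) :
    HasDerivAt (fun y : ℝ => -(r * y)) (-r) x := by
  simpa using (ofRealCLM.hasDerivAt.const_mul r).fun_neg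

theorem mellinConvergent_exp_neg_mul {r s : ℂ} (hr : 0 < r.re) (hs : 0 < s.re) :
    MellinConvergent (fun x : ℝ => exp (-(r * x))) s := by
  refine mellinConvergent_of_isBigO_rpow_exp (b := 0) hr
    ((Continuous.locallyIntegrable (by fun_prop)).locallyIntegrableOn _) ?_ ?_ hs
  · refine IsBigO.of_bound 1 (.of_forall fun x => ?_)
    simp [norm_exp]
  · simp only [neg_zero, Real.rpow_zero]
    refine Tendsto.isBigO_one ℝ (c := 1) ?_
    exact tendsto_nhdsWithin_of_tendsto_nhds <|
      Continuous.tendsto' (by fun_prop) _ _ (by simp)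

theorem differentiableOn_mellin_exp_neg_mul {s : ℂ} (hs : 0 < s.re) :
    DifferentiableOn ℂ (fun r : ℂ => mellin (fun x : ℝ => exp (-(r * x))) s) {r | 0 < r.re} := by
  intro z (hz : 0 < z.re)
  have hnhds : {w : ℂ | z.re / 2 < w.re} ∈ 𝓝 z :=
    (isOpen_lt continuous_const continuous_re).mem_nhds (half_lt_self hz)
  have hbound : IntegrableOn
      (fun x : ℝ => ‖(x : ℂ) ^ (s + 1 - 1) • exp (-(((z.re / 2 : ℝ) : ℂ) * x))‖) (Ioi 0) :=
    (mellinConvergent_exp_neg_mul (s := s + 1) (by simpa using hz) (by simp; linarith)).norm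
  have hmeas (w : ℂ) : AEStronglyMeasurable
      (fun x : ℝ => (x : ℂ) ^ (s - 1) • exp (-(w * x))) (volume.restrict (Ioi 0)) :=
    Measurable.aestronglyMeasurable (by fun_prop)
  refine (hasDerivAt_integral_of_dominated_loc_of_deriv_le
    (F' := fun w x => (x : ℂ) ^ (s - 1) • (exp (-(w * x)) * -x)) hnhds (.of_forall hmeas)
    (mellinConvergent_exp_neg_mul hz hs) (Measurable.aestronglyMeasurable (by fun_prop))
    ((ae_restrict_iff' measurableSet_Ioi).2 (.of_forall fun x (hx : 0 < x) w hw => ?_))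
    hbound (.of_forall fun x w _ => ?_)).2.differentiableAt.differentiableWithinAt
  · have hpow : (x : ℂ) ^ (s + 1 - 1) = x ^ (s - 1) * x := by
      rw [add_sub_right_comm, cpow_add _ _ (ofReal_ne_zero.2 hx.ne'), cpow_one]
    have hdecay : ‖exp (-(w * x))‖ ≤ ‖exp (-(((z.re / 2 : ℝ) : ℂ) * x))‖ := by
      have hw : z.re / 2 ≤ w.re := le_of_lt hw
      simp only [norm_exp, neg_re, re_mul_ofReal, ofReal_re]
      gcongr
    simp only [hpow, norm_smul, norm_mul, norm_neg]
    calc _ = ‖(x : ℂ) ^ (s - 1)‖ * ‖(x : ℂ)‖ * ‖exp (-(w * x))‖ := by ring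
      _ ≤ _ := by gcongr
  · have hlin : HasDerivAt (fun w : ℂ => -(w * x)) (-(x : ℂ)) w := by
      simpa using ((hasDerivAt_id w).mul_const (x : ℂ)).fun_neg
    exact hlin.cexp.const_mul _

theorem differentiableOn_cpow_neg_mul_Gamma (s : ℂ) :
    DifferentiableOn ℂ (fun r : ℂ => r ^ (-s) * Gamma s) slitPlane := fun _ hr =>
  ((differentiableAt_id.cpow_const hr).mul_const _).differentiableWithinAt

theorem mellin_exp_neg_ofReal_mul {s : ℂ} (hs : 0 < s.re) {r : ℝ} (hr : 0 < r) :
    mellin (fun x : ℝ => exp (-((r : ℂ) * x))) s = (r : ℂ) ^ (-s) * Gamma s := by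
  have harg : (r : ℂ).arg ≠ Real.pi := by
    rw [arg_ofReal_of_nonneg hr.le]
    exact Real.pi_pos.ne
  have h := integral_cpow_mul_exp_neg_mul_Ioi hs hr
  rwa [one_div, inv_cpow _ _ harg, ← cpow_neg] at h

theorem mellin_exp_neg_mul {r s : ℂ} (hr : 0 < r.re) (hs : 0 < s.re) :
    mellin (fun x : ℝ => exp (-(r * x))) s = r ^ (-s) * Gamma s := by
  have hopen : IsOpen {r : ℂ | 0 < r.re} := isOpen_lt continuous_const continuous_re
  have hlhs := (differentiableOn_mellin_exp_neg_mul hs).analyticOnNhd hopen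
  have hrhs := ((differentiableOn_cpow_neg_mul_Gamma s).mono
    fun r hr => Or.inl hr).analyticOnNhd hopen
  have hcast : Tendsto ((↑) : ℝ → ℂ) (𝓝[≠] 1) (𝓝[≠] 1) := by
    refine tendsto_nhdsWithin_of_tendsto_nhds_of_eventually_within _
      ((continuous_ofReal.tendsto' 1 1 (by simp)).mono_left nhdsWithin_le_nhds) ?_
    filter_upwards [self_mem_nhdsWithin] with x hx
    simpa using hx
  have hreal : ∀ᶠ x : ℝ in 𝓝[≠] 1,
      mellin (fun y : ℝ => exp (-((x : ℂ) * y))) s = (x : ℂ) ^ (-s) * Gamma s :=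
    nhdsWithin_le_nhds ((lt_mem_nhds one_pos).mono fun x => mellin_exp_neg_ofReal_mul hs)
  exact hlhs.eqOn_of_preconnected_of_frequently_eq hrhs
    (convex_halfSpace_re_gt 0).isPreconnected (by simp) (hcast.frequently hreal.frequently) hr

theorem hasMellin_of_hasMellin_deriv {f f' : ℝ → ℂ} {s m : ℂ} (hs : s ≠ 0)
    (hderiv : ∀ x ∈ Ioi (0 : ℝ), HasDerivAt f (f' x) x) (hf' : HasMellin f' (s + 1) m)
    (hf : MellinConvergent f s) (hbot : Tendsto (fun x : ℝ => (x : ℂ) ^ s * f x) (𝓝[>] 0) (𝓝 0))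
    (htop : Tendsto (fun x : ℝ => (x : ℂ) ^ s * f x) atTop (𝓝 0)) :
    HasMellin f s (-(m / s)) := by
  have hderiv_pow : ∀ x ∈ Ioi (0 : ℝ),
      HasDerivAt (fun x : ℝ => (x : ℂ) ^ s) (s * (x : ℂ) ^ (s - 1)) x := fun x hx => by
    simpa using ((hasDerivAt_id (x : ℂ)).cpow_const (c := s) (Or.inl hx)).comp_ofReal
  have hf'_conv : IntegrableOn (fun x : ℝ => (x : ℂ) ^ s * f' x) (Ioi 0) := by
    simpa [MellinConvergent] using hf'.1
  have hf_conv : IntegrableOn (fun x : ℝ => s * (x : ℂ) ^ (s - 1) * f x) (Ioi 0) := by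
    simpa [MellinConvergent, IntegrableOn, mul_assoc] using hf.const_mul s
  have hparts := integral_Ioi_mul_deriv_eq_deriv_mul hderiv_pow hderiv hf'_conv hf_conv hbot htop
  have hm : ∫ x : ℝ in Ioi 0, (x : ℂ) ^ s * f' x = m := by simpa [mellin] using hf'.2
  refine ⟨hf, ?_⟩
  rw [hm, sub_zero, zero_sub] at hparts
  simp only [mul_assoc, integral_const_mul] at hparts
  rw [hparts, neg_div, neg_neg, mul_div_cancel_left₀ _ hs]
  rfl

theorem integrableOn_rpow_mul_min_pow_pow_succ {k : ℕ} {σ R : ℝ} (hR : 0 ≤ R)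
    (hkσ : -(k + 1) < σ) (hσk : σ < -k) :
    IntegrableOn (fun x : ℝ => x ^ (σ - 1) * min ((R * x) ^ k) ((R * x) ^ (k + 1))) (Ioi 0) := by
  have hbound {β : ℝ} (hkβ : k ≤ β) (hβk : β ≤ k + 1) {l : Filter ℝ} (hl : ∀ᶠ x in l, 0 < x) :
      (fun x : ℝ => min ((R * x) ^ k) ((R * x) ^ (k + 1))) =O[l] (· ^ β) := by
    refine .of_bound (R ^ β) (hl.mono fun x hx => ?_)
    rw [Real.norm_of_nonneg (by positivity), Real.norm_of_nonneg (by positivity),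
      ← Real.mul_rpow hR hx.le]
    exact min_pow_pow_succ_le_rpow (by positivity) hkβ hβk
  refine mellin_convergent_of_isBigO_scalar (a := -k) (b := -(k + 1))
    ((Continuous.locallyIntegrable (by fun_prop)).locallyIntegrableOn _) ?_ hσk ?_ hkσ
  · simpa only [neg_neg] using hbound (l := atTop) le_rfl
      (le_add_of_nonneg_right zero_le_one) (eventually_gt_atTop 0)
  · simpa only [neg_neg] using hbound (l := 𝓝[>] 0)
      (le_add_of_nonneg_right zero_le_one) le_rfl self_mem_nhdsWithin

theorem tendsto_cpow_mul_expRemainder_succ_neg_mul {k : ℕ} {β : ℝ} {r s : ℂ} (hr : 0 ≤ r.re)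
    (hkβ : k ≤ β) (hβk : β ≤ k + 1) {l : Filter ℝ} (hl : ∀ᶠ x in l, 0 < x)
    (hlim : Tendsto (fun x : ℝ => x ^ (s.re + β)) l (𝓝 0)) :
    Tendsto (fun x : ℝ => (x : ℂ) ^ s * expRemainder (k + 1) (-(r * x))) l (𝓝 0) := by
  refine squeeze_zero_norm' (a := fun x => 2 * ‖r‖ ^ β * x ^ (s.re + β)) (hl.mono fun x hx => ?_)
    (by simpa using hlim.const_mul (2 * ‖r‖ ^ β))
  have hbound := norm_expRemainder_succ_le_rpow hkβ hβk (re_neg_mul_ofReal_nonpos hr hx.le)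
  rw [norm_neg_mul_ofReal r hx.le, Real.mul_rpow (norm_nonneg r) hx.le] at hbound
  rw [norm_mul, norm_cpow_eq_rpow_re_of_pos hx, Real.rpow_add hx]
  calc x ^ s.re * ‖expRemainder (k + 1) (-(r * x))‖
      ≤ x ^ s.re * (2 * (‖r‖ ^ β * x ^ β)) := by gcongr
    _ = 2 * ‖r‖ ^ β * (x ^ s.re * x ^ β) := by ring

theorem norm_cpow_smul_expRemainder_succ_neg_mul_le (k : ℕ) {r : ℂ} (s : ℂ) {R x : ℝ}
    (hr : 0 ≤ r.re) (hrR : ‖r‖ ≤ R) (hx : 0 < x) :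
    ‖(x : ℂ) ^ (s - 1) • expRemainder (k + 1) (-(r * x))‖ ≤
      2 * (x ^ (s.re - 1) * min ((R * x) ^ k) ((R * x) ^ (k + 1))) := by
  have hbound := norm_expRemainder_succ_le_min k (re_neg_mul_ofReal_nonpos hr hx.le)
  rw [norm_neg_mul_ofReal r hx.le] at hbound
  rw [norm_smul, norm_cpow_eq_rpow_re_of_pos hx, sub_re, one_re, mul_left_comm]
  refine mul_le_mul_of_nonneg_left (hbound.trans ?_) (by positivity)
  gcongr

theorem mellinConvergent_expRemainder_succ_neg_mul {k : ℕ} {r s : ℂ} (hr : 0 ≤ r.re)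
    (hks : -(k + 1) < s.re) (hsk : s.re < -k) :
    MellinConvergent (fun x : ℝ => expRemainder (k + 1) (-(r * x))) s :=
  ((integrableOn_rpow_mul_min_pow_pow_succ (norm_nonneg r) hks hsk).const_mul 2).mono'
    (Measurable.aestronglyMeasurable (by fun_prop)) <|
    (ae_restrict_iff' measurableSet_Ioi).2 <| .of_forall fun _ =>
      norm_cpow_smul_expRemainder_succ_neg_mul_le k s hr le_rfl

theorem hasMellin_expRemainder_neg_mul {k : ℕ} {r s : ℂ} (hr : 0 < r.re) (hks : -k < s.re)
    (hsk : s.re < 1 - k) :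
    HasMellin (fun x : ℝ => expRemainder k (-(r * x))) s (r ^ (-s) * Gamma s) := by
  induction k generalizing s with
  | zero =>
    have hs : 0 < s.re := by simpa using hks
    simpa only [expRemainder_zero] using
      ⟨mellinConvergent_exp_neg_mul hr hs, mellin_exp_neg_mul hr hs⟩
  | succ k ih =>
    push_cast at hks hsk
    have hs0 : s ≠ 0 := by
      rintro rfl
      linarith [zero_re, k.cast_nonneg (α := ℝ)]
    have hr0 : r ≠ 0 := by
      rintro rfl
      exact hr.ne' zero_re
    have hderiv (x : ℝ) : HasDerivAt (fun y : ℝ => expRemainder (k + 1) (-(r * y)))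
        (-r * expRemainder k (-(r * x))) x := by
      rw [mul_comm]
      exact (hasDerivAt_expRemainder_succ k _).comp x (hasDerivAt_neg_mul_ofReal r x)
    have hbot : Tendsto (fun x : ℝ => x ^ (s.re + (k + 1))) (𝓝[>] 0) (𝓝 0) :=
      tendsto_nhdsWithin_of_tendsto_nhds ((Real.continuous_rpow_const (by linarith)).tendsto' 0 0
        (Real.zero_rpow (by linarith)))
    have htop : Tendsto (fun x : ℝ => x ^ (s.re + k)) atTop (𝓝 0) := by
      simpa using tendsto_rpow_neg_atTop (y := -(s.re + k)) (by linarith)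
    obtain ⟨hconv, hmellin⟩ := ih (s := s + 1) (by rw [add_re, one_re]; linarith)
      (by rw [add_re, one_re]; linarith)
    convert hasMellin_of_hasMellin_deriv hs0 (fun x _ => hderiv x)
      (hasMellin_const_smul hconv (-r))
      (mellinConvergent_expRemainder_succ_neg_mul hr.le (by linarith) (by linarith))
      (tendsto_cpow_mul_expRemainder_succ_neg_mul hr.le (by linarith) le_rfl
        self_mem_nhdsWithin hbot)
      (tendsto_cpow_mul_expRemainder_succ_neg_mul hr.le le_rfl (by linarith)
        (eventually_gt_atTop 0) htop) using 1
    rw [hmellin, Gamma_add_one s hs0, neg_add, cpow_add _ _ hr0, cpow_neg_one, smul_eq_mul]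
    field_simp

theorem continuousOn_mellin_expRemainder_succ_neg_mul {k : ℕ} {s : ℂ}
    (hks : -(k + 1) < s.re) (hsk : s.re < -k) :
    ContinuousOn (fun r : ℂ => mellin (fun x : ℝ => expRemainder (k + 1) (-(r * x))) s)
      {r | 0 ≤ r.re} := by
  intro r₀ _
  have hnorm : ∀ᶠ r : ℂ in 𝓝[{r | 0 ≤ r.re}] r₀, ‖r‖ ≤ ‖r₀‖ + 1 :=
    nhdsWithin_le_nhds (continuous_norm.continuousAt.eventually_le_const (lt_add_one ‖r₀‖))
  refine continuousWithinAt_of_dominated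
    (.of_forall fun r => Measurable.aestronglyMeasurable (by fun_prop)) ?_
    ((integrableOn_rpow_mul_min_pow_pow_succ (R := ‖r₀‖ + 1) (by positivity) hks hsk).const_mul 2)
    (.of_forall fun x => Continuous.continuousWithinAt (by fun_prop))
  filter_upwards [hnorm, self_mem_nhdsWithin] with r hnorm hr
  exact (ae_restrict_iff' measurableSet_Ioi).2 (.of_forall fun x =>
    norm_cpow_smul_expRemainder_succ_neg_mul_le k s hr hnorm)

/-- The Cauchy–Saalschütz formula. -/
theorem mellin_expRemainder_succ_neg_mul {k : ℕ} {r s : ℂ} (hr : 0 ≤ r.re) (hr0 : r ≠ 0)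
    (hks : -(k + 1) < s.re) (hsk : s.re < -k) :
    mellin (fun x : ℝ => expRemainder (k + 1) (-(r * x))) s = r ^ (-s) * Gamma s := by
  have hclosed : {r : ℂ | 0 ≤ r.re} ⊆ closure {r : ℂ | 0 < r.re} :=
    (closure_preimage_re (Ioi 0)).trans (by rw [closure_Ioi]; rfl) |>.ge
  have hslit : {r : ℂ | 0 ≤ r.re ∧ r ≠ 0} ⊆ slitPlane := fun r ⟨hr, hr0⟩ => by
    refine mem_slitPlane_iff_not_le_zero.2 fun h => ?_
    obtain ⟨hre, him⟩ := Complex.le_def.1 h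
    exact hr0 (Complex.ext (le_antisymm hre hr) him)
  have heq : EqOn (fun r : ℂ => mellin (fun x : ℝ => expRemainder (k + 1) (-(r * x))) s)
      (fun r => r ^ (-s) * Gamma s) {r | 0 < r.re} := fun r hr =>
    (hasMellin_expRemainder_neg_mul hr (by push_cast; linarith) (by push_cast; linarith)).2
  exact heq.of_subset_closure
    ((continuousOn_mellin_expRemainder_succ_neg_mul hks hsk).mono fun r hr => hr.1)
    ((differentiableOn_cpow_neg_mul_Gamma s).continuousOn.mono hslit)
    (fun r (hr : 0 < r.re) => ⟨hr.le, fun h => by simp [h] at hr⟩)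
    (fun r hr => hclosed hr.1) ⟨hr, hr0⟩

theorem neg_I_cpow (a : ℂ) : (-I) ^ a = exp (-(Real.pi : ℂ) * I / 2 * a) := by
  rw [cpow_def_of_ne_zero (neg_ne_zero.2 I_ne_zero), log_neg_I]
  ring_nf

theorem hasMellin_expRemainder_succ_I_mul {k : ℕ} {α : ℝ} (hkα : k < α) (hαk : α < k + 1) :
    HasMellin (fun x : ℝ => expRemainder (k + 1) (I * x)) (-α)
      (exp (-(Real.pi : ℂ) * I / 2 * α) * Gamma (-α)) := by
  have hre : (-(α : ℂ)).re = -α := by simp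
  have hI : 0 ≤ (-I).re := by simp
  have hks : -(k + 1) < (-(α : ℂ)).re := by rw [hre]; linarith
  have hsk : (-(α : ℂ)).re < -k := by rw [hre]; linarith
  have hconv := mellinConvergent_expRemainder_succ_neg_mul hI hks hsk
  have hval := mellin_expRemainder_succ_neg_mul hI (neg_ne_zero.2 I_ne_zero) hks hsk
  simp only [neg_mul, neg_neg, neg_I_cpow] at hconv hval
  exact ⟨hconv, by simpa only [neg_mul] using hval⟩

theorem hasMellin_comp_mul_rpow_neg {f : ℝ → ℂ} {lam t : ℝ} {s m : ℂ} (hlam : 0 < lam)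
    (ht : 0 < t) (hf : HasMellin f (-(s / lam)) m) :
    HasMellin (fun x => f (t * x ^ (-lam))) s ((t : ℂ) ^ (s / lam) * m / lam) := by
  have hs : s / ((-lam : ℝ) : ℂ) = -(s / lam) := by rw [ofReal_neg, div_neg]
  constructor
  · rw [MellinConvergent.comp_rpow (f := fun y => f (t * y)) (neg_ne_zero.2 hlam.ne'), hs,
      MellinConvergent.comp_mul_left ht]
    exact hf.1
  · rw [mellin_comp_rpow (fun y => f (t * y)), hs, mellin_comp_mul_left f _ ht, hf.2, neg_neg,
      abs_neg, abs_of_pos hlam, real_smul, smul_eq_mul, ofReal_inv, inv_mul_eq_div]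

theorem hasMellin_expRemainder_mul_rpow_neg {k : ℕ} {lam t : ℝ} (hk : k < 1 / lam)
    (hk' : 1 / lam < k + 1) (ht : 0 < t) :
    HasMellin (fun x : ℝ => expRemainder (k + 1) (I * t * (x ^ (-lam) : ℝ))) 1
      (-(exp (-(Real.pi : ℂ) * I / (2 * lam)) * (Real.Gamma (1 - 1 / lam) : ℂ)) *
        ((t ^ (1 / lam) : ℝ) : ℂ)) := by
  have hlam : 0 < lam := one_div_pos.1 (k.cast_nonneg.trans_lt hk)
  have hGamma : Real.Gamma (1 - 1 / lam) = -(1 / lam) * Real.Gamma (-(1 / lam)) := by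
    rw [← Real.Gamma_add_one (neg_ne_zero.2 (one_div_pos.2 hlam).ne'), neg_add_eq_sub]
  have hI := hasMellin_expRemainder_succ_I_mul hk hk'
  have h := hasMellin_comp_mul_rpow_neg (s := 1) hlam ht (by simpa using hI)
  simp only [ofReal_mul, ← mul_assoc] at h
  convert h using 1
  rw [hGamma, ofReal_cpow ht.le, ofReal_mul, ← Gamma_ofReal]
  push_cast
  field_simp

theorem integrableOn_expRemainder_mul_rpow_neg {k : ℕ} {lam t : ℝ} (hk : k < 1 / lam)
    (hk' : 1 / lam < k + 1) (ht : 0 < t) :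
    IntegrableOn (fun x : ℝ => expRemainder (k + 1) (I * t * (x ^ (-lam) : ℝ))) (Ioi 0) := by
  simpa [MellinConvergent] using (hasMellin_expRemainder_mul_rpow_neg hk hk' ht).1

theorem integral_expRemainder_mul_rpow_neg {k : ℕ} {lam t : ℝ} (hk : k < 1 / lam)
    (hk' : 1 / lam < k + 1) (ht : 0 < t) :
    ∫ x : ℝ in Ioi 0, expRemainder (k + 1) (I * t * (x ^ (-lam) : ℝ)) =
      -(exp (-(Real.pi : ℂ) * I / (2 * lam)) * (Real.Gamma (1 - 1 / lam) : ℂ)) *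
        ((t ^ (1 / lam) : ℝ) : ℂ) := by
  rw [← (hasMellin_expRemainder_mul_rpow_neg hk hk' ht).2]
  simp only [mellin, sub_self, cpow_zero, one_smul]

theorem rpow_sub_rpow_le {lam a b : ℝ} (hlam : 0 ≤ lam) (ha : 0 < a) (hab : a ≤ b)
    (hba : b ≤ 2 * a) : b ^ lam - a ^ lam ≤ 2 * lam * b ^ (lam - 1) * (b - a) := by
  have hb : 0 < b := ha.trans_le hab
  have hderiv_le : ∀ x ∈ Icc a b, ‖lam * x ^ (lam - 1)‖ ≤ 2 * lam * b ^ (lam - 1) := by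
    rintro x ⟨hax, hxb⟩
    have hx : 0 < x := ha.trans_le hax
    rw [Real.norm_of_nonneg (by positivity), Real.rpow_sub_one hx.ne', Real.rpow_sub_one hb.ne']
    calc lam * (x ^ lam / x) ≤ lam * (b ^ lam / (b / 2)) := by
          gcongr
          linarith
      _ = 2 * lam * (b ^ lam / b) := by ring
  have h := (convex_Icc a b).norm_image_sub_le_of_norm_hasDerivWithin_le
    (fun x hx => (Real.hasDerivAt_rpow_const (Or.inl (ha.trans_le hx.1).ne')).hasDerivWithinAt)
    hderiv_le (left_mem_Icc.2 hab) (right_mem_Icc.2 hab)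
  rw [Real.norm_of_nonneg (sub_nonneg.2 hab)] at h
  exact (le_abs_self _).trans h

theorem one_le_floor_one_div {x : ℝ} (hx : x ∈ Ioc (0 : ℝ) 1) : (1 : ℝ) ≤ ⌊1 / x⌋ := by
  exact_mod_cast Int.le_floor.2 (by simpa using one_le_one_div hx.1 hx.2)

theorem rpow_floor_one_div_le {lam x : ℝ} (hlam : 0 ≤ lam) (hx : x ∈ Ioc (0 : ℝ) 1) :
    (⌊1 / x⌋ : ℝ) ^ lam ≤ x ^ (-lam) := by
  rw [Real.rpow_neg hx.1.le, ← Real.inv_rpow hx.1.le, ← one_div]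
  exact Real.rpow_le_rpow (zero_le_one.trans (one_le_floor_one_div hx)) (Int.floor_le _) hlam

theorem rpow_neg_sub_rpow_floor_one_div_le {lam x : ℝ} (hlam : 0 ≤ lam) (hx : x ∈ Ioc (0 : ℝ) 1) :
    x ^ (-lam) - (⌊1 / x⌋ : ℝ) ^ lam ≤ 2 * lam * x ^ (1 - lam) := by
  have hfloor := one_le_floor_one_div hx
  have hlt := Int.lt_floor_add_one (1 / x)
  have h := rpow_sub_rpow_le hlam (zero_lt_one.trans_le hfloor) (Int.floor_le (1 / x))
    (by linarith)
  rw [one_div, Real.inv_rpow hx.1.le, Real.inv_rpow hx.1.le, ← Real.rpow_neg hx.1.le,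
    ← Real.rpow_neg hx.1.le, neg_sub, ← one_div] at h
  refine h.trans (mul_le_of_le_one_right ?_ (by linarith))
  have := hx.1
  positivity

theorem norm_I_mul_ofReal_mul_ofReal {t y : ℝ} (ht : 0 ≤ t) (hy : 0 ≤ y) : ‖I * t * y‖ = t * y := by
  simp [abs_of_nonneg ht, abs_of_nonneg hy]

theorem norm_expRemainder_rpow_neg_le {k : ℕ} {β lam t x : ℝ} (hkβ : k ≤ β) (hβk : β ≤ k + 1)
    (ht : 0 < t) (hx : 0 < x) :
    ‖expRemainder (k + 1) (I * t * (x ^ (-lam) : ℝ))‖ ≤ 2 * t ^ β * x ^ (-(lam * β)) := by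
  have h := norm_expRemainder_succ_le_rpow (z := I * t * (x ^ (-lam) : ℝ)) hkβ hβk (by simp)
  rwa [norm_I_mul_ofReal_mul_ofReal ht.le (by positivity), Real.mul_rpow ht.le (by positivity),
    ← Real.rpow_mul hx.le, neg_mul, ← mul_assoc] at h

theorem norm_expRemainder_rpow_floor_sub_le {k : ℕ} {β lam t x : ℝ} (hkβ : k ≤ β)
    (hβk : β ≤ k + 1) (hlam : 0 < lam) (ht : 0 < t) (hx : x ∈ Ioc (0 : ℝ) 1) :
    ‖expRemainder (k + 1) (I * t * ((⌊1 / x⌋ : ℝ) ^ lam : ℝ)) -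
        expRemainder (k + 1) (I * t * (x ^ (-lam) : ℝ))‖ ≤
      2 * (2 * lam) ^ min β 1 * t ^ β * x ^ (min β 1 - lam * β) := by
  have hx0 : 0 < x := hx.1
  have hβ : 0 ≤ β := k.cast_nonneg.trans hkβ
  have hle := rpow_floor_one_div_le hlam.le hx
  have hdist : ‖I * t * ((⌊1 / x⌋ : ℝ) ^ lam : ℝ) - I * t * (x ^ (-lam) : ℝ)‖ ≤
      t * (2 * lam * x ^ (1 - lam)) := by
    rw [norm_sub_rev, ← mul_sub, ← ofReal_sub,
      norm_I_mul_ofReal_mul_ofReal ht.le (sub_nonneg.2 hle)]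
    gcongr
    exact rpow_neg_sub_rpow_floor_one_div_le hlam.le hx
  have h := norm_expRemainder_succ_sub_le_rpow (R := t * x ^ (-lam)) hkβ hβk
    (v := I * t * ((⌊1 / x⌋ : ℝ) ^ lam : ℝ)) (w := I * t * (x ^ (-lam) : ℝ)) (by simp)
    (by rw [norm_I_mul_ofReal_mul_ofReal ht.le (by positivity)]; gcongr) (by simp)
    (norm_I_mul_ofReal_mul_ofReal ht.le (by positivity)).le
  have htpow : t ^ (β - min β 1) * t ^ min β 1 = t ^ β := by
    rw [← Real.rpow_add ht, sub_add_cancel]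
  have hxpow : x ^ (-lam * (β - min β 1)) * x ^ ((1 - lam) * min β 1) =
      x ^ (min β 1 - lam * β) := by
    rw [← Real.rpow_add hx0]
    ring_nf
  calc _ ≤ 2 * (t * x ^ (-lam)) ^ (β - min β 1) * _ := h
    _ ≤ 2 * (t * x ^ (-lam)) ^ (β - min β 1) * (t * (2 * lam * x ^ (1 - lam))) ^ min β 1 := by
      gcongr
    _ = 2 * (2 * lam) ^ min β 1 * (t ^ (β - min β 1) * t ^ min β 1) *
        (x ^ (-lam * (β - min β 1)) * x ^ ((1 - lam) * min β 1)) := by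
      rw [Real.mul_rpow ht.le (by positivity), Real.mul_rpow ht.le (by positivity),
        Real.mul_rpow (by positivity) (by positivity), ← Real.rpow_mul hx0.le,
        ← Real.rpow_mul hx0.le]
      ring
    _ = 2 * (2 * lam) ^ min β 1 * t ^ β * x ^ (min β 1 - lam * β) := by rw [htpow, hxpow]

theorem norm_inv_one_add_smul_sub_le {E : Type*} [NormedAddCommGroup E] [NormedSpace ℝ E] {x : ℝ}
    (hx : 0 ≤ x) (v w : E) : ‖(1 + x)⁻¹ • v - w‖ ≤ ‖v - w‖ + x * ‖w‖ := by
  have hsplit : (1 + x)⁻¹ • v - w = (1 + x)⁻¹ • ((v - w) - x • w) := by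
    match_scalars <;> field_simp
    ring
  calc ‖(1 + x)⁻¹ • v - w‖ ≤ ‖(v - w) - x • w‖ := by
        rw [hsplit, norm_smul, Real.norm_of_nonneg (by positivity)]
        exact mul_le_of_le_one_left (norm_nonneg _) (inv_le_one_of_one_le₀ (by linarith))
    _ ≤ ‖v - w‖ + x * ‖w‖ := by
        simpa [norm_smul, abs_of_nonneg hx] using norm_sub_le (v - w) (x • w)

theorem norm_inv_one_add_smul_expRemainder_sub_le {k : ℕ} {β lam t x : ℝ} (hkβ : k ≤ β)
    (hβk : β ≤ k + 1) (hlam : 0 < lam) (ht : 0 < t) (hx : x ∈ Ioc (0 : ℝ) 1) :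
    ‖(1 + x)⁻¹ • expRemainder (k + 1) (I * t * ((⌊1 / x⌋ : ℝ) ^ lam : ℝ)) -
        expRemainder (k + 1) (I * t * (x ^ (-lam) : ℝ))‖ ≤
      (2 * (2 * lam) ^ min β 1 + 2) * t ^ β * x ^ (min β 1 - lam * β) := by
  have hx0 : 0 < x := hx.1
  have hweight : x * ‖expRemainder (k + 1) (I * t * (x ^ (-lam) : ℝ))‖ ≤
      2 * t ^ β * x ^ (min β 1 - lam * β) := by
    calc _ ≤ x ^ min β 1 * (2 * t ^ β * x ^ (-(lam * β))) := by
          gcongr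
          · simpa using Real.rpow_le_rpow_of_exponent_ge hx0 hx.2 (min_le_right β 1)
          · exact norm_expRemainder_rpow_neg_le hkβ hβk ht hx0
      _ = 2 * t ^ β * x ^ (min β 1 - lam * β) := by
          rw [sub_eq_add_neg, Real.rpow_add hx0]
          ring
  linarith [norm_inv_one_add_smul_sub_le hx0.le
      (expRemainder (k + 1) (I * t * ((⌊1 / x⌋ : ℝ) ^ lam : ℝ)))
      (expRemainder (k + 1) (I * t * (x ^ (-lam) : ℝ))),
    norm_expRemainder_rpow_floor_sub_le hkβ hβk hlam ht hx]

theorem integral_gaussMeasure {E : Type*} [NormedAddCommGroup E] [NormedSpace ℝ E] (g : ℝ → E) :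
    ∫ x, g x ∂gaussMeasure =
      (Real.log 2)⁻¹ • ∫ x in Ioc (0 : ℝ) 1, (1 + x)⁻¹ • g x := by
  rw [gaussMeasure, integral_withDensity_eq_integral_toReal_smul (by fun_prop)
    (.of_forall fun _ => ENNReal.ofReal_lt_top), integral_Ioc_eq_integral_Ioo, ← integral_smul]
  refine setIntegral_congr_fun measurableSet_Ioo fun x hx => ?_
  have hx0 : 0 < x := hx.1
  rw [ENNReal.toReal_ofReal (by positivity), one_div, mul_inv_rev, mul_smul]

theorem gaussMeasure_le_smul_restrict :
    gaussMeasure ≤ ENNReal.ofReal (1 / Real.log 2) • volume.restrict (Ioc (0 : ℝ) 1) := by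
  rw [gaussMeasure, ← restrict_Ioo_eq_restrict_Ioc, ← withDensity_const]
  refine withDensity_mono ((ae_restrict_iff' measurableSet_Ioo).2 (.of_forall fun x hx => ?_))
  have hlog : 0 < Real.log 2 := Real.log_pos one_lt_two
  refine ENNReal.ofReal_le_ofReal (one_div_le_one_div_of_le hlog ?_)
  exact le_mul_of_one_le_left hlog.le (by linarith [hx.1])

instance isFiniteMeasure_gaussMeasure : IsFiniteMeasure gaussMeasure :=
  haveI := Measure.smul_finite (volume.restrict (Ioc (0 : ℝ) 1))
    (ENNReal.ofReal_ne_top (r := 1 / Real.log 2))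
  isFiniteMeasure_of_le _ gaussMeasure_le_smul_restrict

theorem integrable_gaussMeasure {E : Type*} [NormedAddCommGroup E] {g : ℝ → E}
    (hg : IntegrableOn g (Ioc 0 1)) : Integrable g gaussMeasure :=
  (hg.smul_measure ENNReal.ofReal_ne_top).mono_measure gaussMeasure_le_smul_restrict

@[fun_prop]
theorem measurable_rpow_floor_one_div (lam : ℝ) :
    Measurable fun x : ℝ => (⌊1 / x⌋ : ℝ) ^ lam := by
  have hcast : Measurable ((↑) : ℤ → ℝ) := measurable_from_top
  exact (hcast.comp (Int.measurable_floor.comp (by fun_prop))).pow_const lam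

theorem integrableOn_rpow_floor_one_div_pow {j : ℕ} {lam : ℝ} (hlam : 0 ≤ lam)
    (hj : lam * j < 1) : IntegrableOn (fun x : ℝ => ((⌊1 / x⌋ : ℝ) ^ lam) ^ j) (Ioc 0 1) := by
  have hdom : IntegrableOn (fun x : ℝ => x ^ (-(lam * j))) (Ioc 0 1) :=
    (intervalIntegrable_iff_integrableOn_Ioc_of_le zero_le_one).1
      (intervalIntegral.intervalIntegrable_rpow' (by linarith))
  refine hdom.mono' (Measurable.aestronglyMeasurable (by fun_prop))
    ((ae_restrict_iff' measurableSet_Ioc).2 (.of_forall fun x hx => ?_))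
  have hfloor : 0 ≤ (⌊1 / x⌋ : ℝ) := zero_le_one.trans (one_le_floor_one_div hx)
  rw [Real.norm_of_nonneg (by positivity), ← neg_mul, Real.rpow_mul hx.1.le, Real.rpow_natCast]
  gcongr
  exact rpow_floor_one_div_le hlam hx

theorem expRemainder_succ_eq_sub_sum_Icc (k : ℕ) (z : ℂ) :
    expRemainder (k + 1) z = exp z - 1 - ∑ j ∈ Finset.Icc 1 k, z ^ j / (j ! : ℂ) := by
  rw [expRemainder, Finset.range_eq_Ico, Finset.sum_eq_sum_Ico_succ_bot k.succ_pos, zero_add,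
    Nat.succ_eq_add_one, Finset.Ico_add_one_right_eq_Icc, pow_zero, Nat.factorial_zero,
    Nat.cast_one, div_one, sub_sub]

section Moments

variable {Ω : Type*} [MeasurableSpace Ω] {μ : Measure Ω} {X : Ω → ℝ} {k : ℕ}

theorem integrable_exp_I_mul_sub_one [IsFiniteMeasure μ] (hX : AEMeasurable X μ) (t : ℝ) :
    Integrable (fun ω => exp (I * t * X ω) - 1) μ := by
  refine (Integrable.of_bound (C := 1) ?_ (.of_forall fun ω => ?_)).sub (integrable_const 1)
  · exact AEMeasurable.aestronglyMeasurable (by fun_prop)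
  · exact norm_exp_le_one (by simp)

theorem integrable_I_mul_pow_div_factorial (hint : ∀ j ∈ Finset.Icc 1 k, Integrable (X · ^ j) μ)
    (t : ℝ) : ∀ j ∈ Finset.Icc 1 k, Integrable (fun ω => (I * t * X ω) ^ j / (j ! : ℂ)) μ :=
  fun j hj => by
    simpa [mul_pow] using ((hint j hj).ofReal.const_mul ((I * t) ^ j)).div_const (j ! : ℂ)

theorem integrable_expRemainder_succ_I_mul [IsFiniteMeasure μ] (hX : AEMeasurable X μ)
    (hint : ∀ j ∈ Finset.Icc 1 k, Integrable (X · ^ j) μ) (t : ℝ) :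
    Integrable (fun ω => expRemainder (k + 1) (I * t * X ω)) μ := by
  simp only [expRemainder_succ_eq_sub_sum_Icc]
  exact (integrable_exp_I_mul_sub_one hX t).sub
    (integrable_finsetSum _ (integrable_I_mul_pow_div_factorial hint t))

theorem integral_expRemainder_succ_I_mul [IsFiniteMeasure μ] (hX : AEMeasurable X μ)
    (hint : ∀ j ∈ Finset.Icc 1 k, Integrable (X · ^ j) μ) (t : ℝ) :
    ∫ ω, expRemainder (k + 1) (I * t * X ω) ∂μ = ∫ ω, (exp (I * t * X ω) - 1) ∂μ -
      ∑ j ∈ Finset.Icc 1 k, (I * t) ^ j / (j ! : ℂ) * ((∫ ω, X ω ^ j ∂μ : ℝ) : ℂ) := by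
  have hterms := integrable_I_mul_pow_div_factorial hint t
  simp only [expRemainder_succ_eq_sub_sum_Icc]
  rw [integral_sub (integrable_exp_I_mul_sub_one hX t) (integrable_finsetSum _ hterms),
    integral_finsetSum _ hterms]
  congr! 2 with j
  rw [← integral_complex_ofReal, ← integral_const_mul]
  congr! 2
  push_cast
  ring

end Moments

theorem norm_integral_Ioi_expRemainder_rpow_neg_le {k : ℕ} {β lam t : ℝ} (hkβ : k ≤ β)
    (hβk : β ≤ k + 1) (hlamβ : 1 < lam * β) (ht : 0 < t) :
    ‖∫ x : ℝ in Ioi 1, expRemainder (k + 1) (I * t * (x ^ (-lam) : ℝ))‖ ≤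
      2 / (lam * β - 1) * t ^ β := by
  have hdom : IntegrableOn (fun x : ℝ => 2 * t ^ β * x ^ (-(lam * β))) (Ioi 1) :=
    (integrableOn_Ioi_rpow_of_lt (by linarith) one_pos).const_mul _
  refine (norm_integral_le_of_norm_le hdom ((ae_restrict_iff' measurableSet_Ioi).2
    (.of_forall fun x hx => norm_expRemainder_rpow_neg_le hkβ hβk ht (one_pos.trans hx)))).trans_eq
      ?_
  rw [integral_const_mul, integral_Ioi_rpow_of_lt (by linarith) one_pos, Real.one_rpow,
    neg_add_eq_sub, ← neg_sub, neg_div_neg_eq]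
  ring

theorem norm_setIntegral_Ioc_expRemainder_sub_le {k : ℕ} {β lam t : ℝ} (hkβ : k ≤ β)
    (hβk : β ≤ k + 1) (hlam : 0 < lam) (hlamβ : lam * β < 1 + min β 1) (ht : 0 < t) :
    ‖∫ x in Ioc (0 : ℝ) 1, ((1 + x)⁻¹ • expRemainder (k + 1) (I * t * ((⌊1 / x⌋ : ℝ) ^ lam : ℝ)) -
        expRemainder (k + 1) (I * t * (x ^ (-lam) : ℝ)))‖ ≤
      (2 * (2 * lam) ^ min β 1 + 2) / (1 + min β 1 - lam * β) * t ^ β := by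
  have hexp : -1 < min β 1 - lam * β := by linarith
  have hdom : IntegrableOn (fun x : ℝ => (2 * (2 * lam) ^ min β 1 + 2) * t ^ β *
      x ^ (min β 1 - lam * β)) (Ioc 0 1) :=
    ((intervalIntegrable_iff_integrableOn_Ioc_of_le zero_le_one).1
      (intervalIntegral.intervalIntegrable_rpow' hexp)).const_mul _
  refine (norm_integral_le_of_norm_le hdom ((ae_restrict_iff' measurableSet_Ioc).2
    (.of_forall fun x hx =>
      norm_inv_one_add_smul_expRemainder_sub_le hkβ hβk hlam ht hx))).trans_eq ?_
  rw [integral_const_mul, ← intervalIntegral.integral_of_le zero_le_one,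
    integral_rpow (Or.inl hexp), Real.one_rpow, Real.zero_rpow (by linarith)]
  ring

theorem integrableOn_rpow_floor_one_div_pow_of_mem_Icc {k : ℕ} {lam : ℝ} (hk : k < 1 / lam) :
    ∀ j ∈ Finset.Icc 1 k, IntegrableOn (fun x : ℝ => ((⌊1 / x⌋ : ℝ) ^ lam) ^ j) (Ioc 0 1) := by
  intro j hj
  have hlam : 0 < lam := one_div_pos.1 (k.cast_nonneg.trans_lt hk)
  have hjk : (j : ℝ) ≤ k := mod_cast (Finset.mem_Icc.1 hj).2
  exact integrableOn_rpow_floor_one_div_pow hlam.le ((lt_div_iff₀' hlam).1 (hjk.trans_lt hk))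

theorem integrableOn_inv_one_add_smul_expRemainder_rpow_floor {k : ℕ} {lam : ℝ}
    (hk : k < 1 / lam) (t : ℝ) : IntegrableOn (fun x : ℝ => (1 + x)⁻¹ •
      expRemainder (k + 1) (I * t * ((⌊1 / x⌋ : ℝ) ^ lam : ℝ))) (Ioc 0 1) := by
  have hweight : AEStronglyMeasurable (fun x : ℝ => (1 + x)⁻¹) (volume.restrict (Ioc 0 1)) :=
    Measurable.aestronglyMeasurable (by fun_prop)
  refine (integrable_expRemainder_succ_I_mul (measurable_rpow_floor_one_div lam).aemeasurable
    (integrableOn_rpow_floor_one_div_pow_of_mem_Icc hk) t).bdd_smul 1 hweight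
    ((ae_restrict_iff' measurableSet_Ioc).2 (.of_forall fun x hx => ?_))
  have hx0 : 0 < x := hx.1
  rw [Real.norm_of_nonneg (by positivity)]
  exact inv_le_one_of_one_le₀ (by linarith)

theorem norm_integral_gaussMeasure_expRemainder_sub_le {k : ℕ} {β lam t : ℝ} (hk : k < 1 / lam)
    (hβ : 1 / lam < β) (hβk : β < k + 1) (hβ' : lam * β < 1 + min β 1) (ht : 0 < t) :
    ‖∫ x : ℝ, expRemainder (k + 1) (I * t * ((⌊1 / x⌋ : ℝ) ^ lam : ℝ)) ∂gaussMeasure -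
        (-(exp (-(Real.pi : ℂ) * I / (2 * lam)) * (Real.Gamma (1 - 1 / lam) : ℂ)) /
          (Real.log 2 : ℂ)) * ((t ^ (1 / lam) : ℝ) : ℂ)‖ ≤
      (Real.log 2)⁻¹ * ((2 * (2 * lam) ^ min β 1 + 2) / (1 + min β 1 - lam * β) +
        2 / (lam * β - 1)) * t ^ β := by
  have hlam : 0 < lam := one_div_pos.1 (k.cast_nonneg.trans_lt hk)
  have hkβ : k ≤ β := hk.le.trans hβ.le
  let f : ℝ → ℂ := fun x => (1 + x)⁻¹ • expRemainder (k + 1) (I * t * ((⌊1 / x⌋ : ℝ) ^ lam : ℝ))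
  let g : ℝ → ℂ := fun x => expRemainder (k + 1) (I * t * (x ^ (-lam) : ℝ))
  have hf : IntegrableOn f (Ioc 0 1) := integrableOn_inv_one_add_smul_expRemainder_rpow_floor hk t
  have hg : IntegrableOn g (Ioi 0) :=
    integrableOn_expRemainder_mul_rpow_neg hk (hβ.trans hβk) ht
  have hg_Ioc : IntegrableOn g (Ioc 0 1) := hg.mono_set Ioc_subset_Ioi_self
  have hg_Ioi : IntegrableOn g (Ioi 1) := hg.mono_set (Ioi_subset_Ioi zero_le_one)
  have hg_split : ∫ x in Ioi 0, g x = (∫ x in Ioc 0 1, g x) + ∫ x in Ioi 1, g x := by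
    rw [← Ioc_union_Ioi_eq_Ioi zero_le_one,
      setIntegral_union Ioc_disjoint_Ioi_same measurableSet_Ioi hg_Ioc hg_Ioi]
  have hbody : ‖∫ x in Ioc 0 1, (f x - g x)‖ ≤ _ :=
    norm_setIntegral_Ioc_expRemainder_sub_le hkβ hβk.le hlam hβ' ht
  have htail : ‖∫ x in Ioi 1, g x‖ ≤ _ :=
    norm_integral_Ioi_expRemainder_rpow_neg_le hkβ hβk.le ((div_lt_iff₀' hlam).1 hβ) ht
  have hsplit : (Real.log 2)⁻¹ • (∫ x in Ioc 0 1, f x) - (Real.log 2)⁻¹ • ∫ x in Ioi 0, g x =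
      (Real.log 2)⁻¹ • ((∫ x in Ioc 0 1, (f x - g x)) - ∫ x in Ioi 1, g x) := by
    rw [integral_sub hf hg_Ioc, hg_split, ← smul_sub, sub_sub]
  have hmain : (-(exp (-(Real.pi : ℂ) * I / (2 * lam)) * (Real.Gamma (1 - 1 / lam) : ℂ)) /
      (Real.log 2 : ℂ)) * ((t ^ (1 / lam) : ℝ) : ℂ) = (Real.log 2)⁻¹ • ∫ x in Ioi 0, g x := by
    rw [integral_expRemainder_mul_rpow_neg hk (hβ.trans hβk) ht, real_smul, ofReal_inv]
    ring
  rw [integral_gaussMeasure, hmain, hsplit, norm_smul, Real.norm_of_nonneg (by positivity),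
    mul_assoc, add_mul]
  gcongr
  exact (norm_sub_le _ _).trans (add_le_add hbody htail)

theorem exists_one_div_lt_and_mul_lt_one_add_min {k : ℕ} {lam : ℝ} (hlam : 0 < lam)
    (hk' : 1 / lam < k + 1) : ∃ β, 1 / lam < β ∧ β < k + 1 ∧ lam * β < 1 + min β 1 := by
  have hmin : 0 < min (1 / lam) 1 := lt_min (one_div_pos.2 hlam) one_pos
  have hlt : 1 / lam < (1 + min (1 / lam) 1) / lam := by gcongr; linarith
  obtain ⟨β, hβ, hβ'⟩ := exists_between (lt_min hk' hlt)
  refine ⟨β, hβ, hβ'.trans_le (min_le_left _ _), ?_⟩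
  calc lam * β < 1 + min (1 / lam) 1 := (lt_div_iff₀' hlam).1 (hβ'.trans_le (min_le_right _ _))
    _ ≤ 1 + min β 1 := by gcongr

theorem isBigO_rpow_rpow_mul_abs_log_rpow {a b : ℝ} (hab : a < b) (c : ℝ) :
    (fun t : ℝ => t ^ b) =O[𝓝[>] 0] fun t => t ^ a * |Real.log t| ^ c := by
  have hlog : (fun t => |Real.log t| ^ (-c)) =O[𝓝[>] 0] fun t : ℝ => t ^ (a - b) :=
    (isLittleO_abs_log_rpow_rpow_nhdsGT_zero (-c) (sub_neg.2 hab)).isBigO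
  have hlog_pos : ∀ᶠ t : ℝ in 𝓝[>] 0, 0 < |Real.log t| := by
    filter_upwards [Ioo_mem_nhdsGT one_pos] with t ht
    exact abs_pos.2 (Real.log_neg ht.1 ht.2).ne
  refine ((isBigO_refl (fun t => t ^ b * |Real.log t| ^ c) (𝓝[>] 0)).mul hlog).congr' ?_ ?_
  · filter_upwards [hlog_pos] with t ht
    rw [mul_assoc, ← Real.rpow_add ht, add_neg_cancel, Real.rpow_zero, mul_one]
  · filter_upwards [self_mem_nhdsWithin] with t ht
    rw [mul_right_comm, ← Real.rpow_add ht, add_sub_cancel]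

theorem exists_forall_norm_le_of_isBigO_rpow {E : Type*} [NormedAddCommGroup E] {f : ℝ → E}
    {a b : ℝ} (hab : a < b) (hf : f =O[𝓝[>] 0] fun t => t ^ b) (c : ℝ) :
    ∃ C > 0, ∃ t₀ > 0, ∀ t, 0 < t → t < t₀ → ‖f t‖ ≤ C * t ^ a * |Real.log t| ^ c := by
  obtain ⟨C, hC, hbound⟩ := (hf.trans (isBigO_rpow_rpow_mul_abs_log_rpow hab c)).exists_pos
  obtain ⟨t₀, ht₀, hsub⟩ := mem_nhdsGT_iff_exists_Ioo_subset.1 hbound.bound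
  refine ⟨C, hC, t₀, ht₀, fun t ht htt₀ => (hsub ⟨ht, htt₀⟩ : ‖f t‖ ≤ _).trans_eq ?_⟩
  rw [Real.norm_of_nonneg (by positivity), mul_assoc]

theorem stmt_17_general {k : ℕ} {lam : ℝ} (hk : k < 1 / lam) (hk' : 1 / lam < k + 1) :
    ∃ β > 1 / lam, (fun t : ℝ =>
      (∫ x, (exp (I * (t : ℂ) * ((⌊1 / x⌋ : ℝ) ^ lam : ℝ)) - 1) ∂gaussMeasure) -
        ∑ j ∈ Finset.Icc 1 k, (I * t) ^ j / (j ! : ℂ) *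
          ((∫ x, ((⌊1 / x⌋ : ℝ) ^ lam) ^ j ∂gaussMeasure : ℝ) : ℂ) -
        (-(exp (-(Real.pi : ℂ) * I / (2 * (lam : ℂ))) * (Real.Gamma (1 - 1 / lam) : ℂ)) /
          (Real.log 2 : ℂ)) * ((t ^ (1 / lam) : ℝ) : ℂ)) =O[𝓝[>] 0] (· ^ β) := by
  have hlam : 0 < lam := one_div_pos.1 (k.cast_nonneg.trans_lt hk)
  obtain ⟨β, hβ, hβk, hβ'⟩ := exists_one_div_lt_and_mul_lt_one_add_min hlam hk'
  refine ⟨β, hβ, .of_bound ((Real.log 2)⁻¹ * ((2 * (2 * lam) ^ min β 1 + 2) /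
    (1 + min β 1 - lam * β) + 2 / (lam * β - 1))) ?_⟩
  filter_upwards [self_mem_nhdsWithin] with t (ht : 0 < t)
  rw [← integral_expRemainder_succ_I_mul (measurable_rpow_floor_one_div lam).aemeasurable
    (fun j hj => integrable_gaussMeasure (integrableOn_rpow_floor_one_div_pow_of_mem_Icc hk j hj)),
    Real.norm_of_nonneg (by positivity)]
  exact norm_integral_gaussMeasure_expRemainder_sub_le hk hβ hβk hβ' ht

end

theorem stmt_17 (lam : ℝ) (hlam : lam ∈ Set.Ioo (1/2 : ℝ) 1 ∪ Set.Ioi (1:ℝ))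
    (ε : ℝ) (hε : ε ∈ Set.Ioo (0:ℝ) 1) :
    ∃ C > (0:ℝ), ∃ t₀ > (0:ℝ), ∀ t : ℝ, 0 < t → t < t₀ →
    ‖(∫ x, (Complex.exp (Complex.I * (t : ℂ) * (((⌊1 / x⌋ : ℝ) ^ lam : ℝ) : ℂ)) - 1)
          ∂gaussMeasure) -
        (if lam < 1 then 1 else 0 : ℂ) * Complex.I *
          ((∫ x, ((⌊1 / x⌋ : ℝ) ^ lam : ℝ) ∂gaussMeasure : ℝ) : ℂ) * (t : ℂ) -
        (-(Complex.exp (-(Real.pi : ℂ) * Complex.I / (2 * (lam : ℂ))) *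
            (Real.Gamma (1 - 1 / lam) : ℂ)) / (Real.log 2 : ℂ)) *
          ((t ^ (1 / lam) : ℝ) : ℂ)‖ ≤
      C * t ^ (1 / lam) * |Real.log t| ^ (-1 + ε) := by
  rcases hlam with ⟨hhalf, hone⟩ | hone
  · obtain ⟨β, hβ, hO⟩ := stmt_17_general (k := 1) (lam := lam)
      (by rw [Nat.cast_one]; exact one_lt_one_div (by linarith) hone)
      (by rw [Nat.cast_one, div_lt_iff₀ (by linarith)]; linarith)
    simpa [hone, mul_right_comm] using exists_forall_norm_le_of_isBigO_rpow hβ hO (-1 + ε)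
  · have hone : 1 < lam := hone
    obtain ⟨β, hβ, hO⟩ := stmt_17_general (k := 0) (lam := lam)
      (by rw [Nat.cast_zero]; positivity) (by simpa using inv_lt_one_of_one_lt₀ hone)
    simpa [hone.not_gt] using exists_forall_norm_le_of_isBigO_rpow hβ hO (-1 + ε)
end
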